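/- Let K be an infinite field, S = K[x_1,...,x_n], and fix an integer j. Let I ⊆ S and J ⊆ S be homogeneous ideals and let w, w' ∈ Z_{≥0}^n be weight vectors. Then for a general change of coordinates g ∈ GL_n(K), one has dim_K Tor_i^S(I, S/g(J))_j ≤ dim_K Tor_i^S(in_w(I), S/in_{w'}(J))_j for all i ≥ 0. -/

import Mathlib

open MvPolynomial TensorProduct CategoryTheory

noncomputable section

/-- The polynomial ring `S = K[x_1,...,x_n]`, standard graded. -/
abbrev PS (K : Type) [Field K] (n : ℕ) : Type := MvPolynomial (Fin n) K

variable (K : Type) [Field K] (n : ℕ)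

/-- An ideal of `S` is homogeneous if it contains all homogeneous components of its
elements. -/
def IsHomog (I : Ideal (PS K n)) : Prop :=
  ∀ f ∈ I, ∀ d : ℕ, MvPolynomial.homogeneousComponent d f ∈ I

/-- The change of coordinates of `S` induced by `g ∈ GL_n(K)`, determined by
`g(x_i) = ∑_j g_{ji} x_j`. -/
def coordChange (g : GL (Fin n) K) : PS K n →ₐ[K] PS K n :=
  MvPolynomial.aeval (fun i => ∑ j, ((g : Matrix (Fin n) (Fin n) K) j i) • MvPolynomial.X j)

/-- A property `P` holds for a general change of coordinates `g ∈ GL_n(K)` if there is a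
nonempty Zariski open subset `U ⊆ GL_n(K)` on which it holds; equivalently (as `GL_n(K)` is
an irreducible variety over the infinite field `K`) there is a nonzero polynomial `F` in the
matrix entries such that `P g` holds whenever `F` does not vanish at `g`. -/
def generally (P : GL (Fin n) K → Prop) : Prop :=
  ∃ F : MvPolynomial (Fin n × Fin n) K, F ≠ 0 ∧
    ∀ g : GL (Fin n) K,
      MvPolynomial.eval (fun p => (g : Matrix (Fin n) (Fin n) K) p.1 p.2) F ≠ 0 → P g

/-- The standard grading of `S = K[x_1,...,x_n]`, extended to `ℤ` (zero in negative
degrees). -/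
def polyGrade (d : ℤ) : Submodule K (PS K n) :=
  if 0 ≤ d then homogeneousSubmodule (Fin n) K d.toNat else ⊥

/-- The degree `d` component of the (internal) tensor-product grading on `A ⊗[K] B`. -/
def tensorGrade {A B : Type} [AddCommGroup A] [Module K A] [AddCommGroup B] [Module K B]
    (GA : ℤ → Submodule K A) (GB : ℤ → Submodule K B) (d : ℤ) :
    Submodule K (A ⊗[K] B) :=
  ⨆ p : ℤ, LinearMap.range (TensorProduct.map (GA p).subtype (GB (d - p)).subtype)

variable (N : Type) [AddCommGroup N] [Module K N] [Module (PS K n) N]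
  [IsScalarTower K (PS K n) N]

/-- The tower of `K`-vector spaces `D_i = S^{⊗ i} ⊗_K N` appearing in the bar complex
`M ⊗_K S^{⊗ i} ⊗_K N`, which computes `Tor^S_i(M, N)`. -/
def barD : ℕ → ModuleCat K
  | 0 => ModuleCat.of K N
  | (i + 1) => ModuleCat.of K (PS K n ⊗[K] (barD i))

/-- The internal `ℤ`-grading on `D_i = S^{⊗ i} ⊗_K N` induced by the standard grading of
`S` and a grading `GN` of `N`. -/
def barDGrade (GN : ℤ → Submodule K N) : (i : ℕ) → ℤ → Submodule K (barD K n N i)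
  | 0 => GN
  | (i + 1) => tensorGrade K (polyGrade K n) (barDGrade GN i)

/-- Scalar multiplication `S → N → N` as a `K`-bilinear map. -/
def smulBilin : PS K n →ₗ[K] N →ₗ[K] N :=
  LinearMap.mk₂ K (fun s x => s • x)
    (fun s₁ s₂ x => add_smul s₁ s₂ x)
    (fun c s x => smul_assoc c s x)
    (fun s x y => smul_add s x y)
    (fun c s x => (smul_comm c s x).symm)

/-- The "contraction" part of the bar differential, `c_i : D_{i+1} → D_i`, defined
recursively by `c_0(s ⊗ x) = s • x` and
`c_{i+1}(s ⊗ s' ⊗ t) = (s s') ⊗ t - s ⊗ c_i(s' ⊗ t)`. -/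
def barC : (i : ℕ) → ((barD K n N (i + 1)) →ₗ[K] (barD K n N i))
  | 0 => TensorProduct.lift (smulBilin K n N)
  | (i + 1) =>
      (TensorProduct.map (LinearMap.mul' K (PS K n)) LinearMap.id).comp
        (TensorProduct.assoc K (PS K n) (PS K n) (barD K n N i)).symm.toLinearMap
      - TensorProduct.map LinearMap.id (barC i)

variable (M : Type) [AddCommGroup M] [Module K M] [Module (PS K n) M]
  [IsScalarTower K (PS K n) M]

/-- Right scalar multiplication `M ⊗[K] S → M` as a `K`-linear map. -/
def smulMapM : M ⊗[K] PS K n →ₗ[K] M :=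
  TensorProduct.lift (LinearMap.mk₂ K (fun m s => s • m)
    (fun m₁ m₂ s => smul_add s m₁ m₂)
    (fun c m s => smul_comm s c m)
    (fun m s₁ s₂ => add_smul s₁ s₂ m)
    (fun c m s => smul_assoc c s m))

/-- The bar differential `b_i : M ⊗ D_{i+1} → M ⊗ D_i`,
`b(m ⊗ s ⊗ t) = (s • m) ⊗ t - m ⊗ c_i(s ⊗ t)`.  The complex
`⋯ → M ⊗_K S^{⊗ i} ⊗_K N → ⋯ → M ⊗_K S ⊗_K N → M ⊗_K N → 0`
is the bar complex `M ⊗_S Bar(S, N)`, whose `i`-th homology is `Tor^S_i(M, N)`;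
it is a complex of graded vector spaces with degree-preserving differentials. -/
def barB (i : ℕ) : (M ⊗[K] (barD K n N (i + 1))) →ₗ[K] (M ⊗[K] (barD K n N i)) :=
  (TensorProduct.map (smulMapM K n M) LinearMap.id).comp
      (TensorProduct.assoc K M (PS K n) (barD K n N i)).symm.toLinearMap
  - TensorProduct.map LinearMap.id (barC K n N i)

/-- `dim_K Tor_i^S(M, N)_j`, the dimension of the degree-`j` component of the graded module
`Tor_i^S(M, N)` for graded modules `M`, `N`: it is computed as the homology of the degree-`j`
strand of the bar complex, namely `dim (ker b_i)_j - dim (im b_{i+1})_j`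
(for `i = 0`, `dim (M ⊗_K N)_j - dim (im b_1)_j`). -/
def torStrandDim (GM : ℤ → Submodule K M) (GN : ℤ → Submodule K N) : ℕ → ℤ → ℕ
  | 0, j =>
      Module.finrank K ↥(tensorGrade K GM (barDGrade K n N GN 0) j) -
        Module.finrank K
          ↥(LinearMap.range (barB K n N M 0) ⊓ tensorGrade K GM (barDGrade K n N GN 0) j)
  | (i + 1), j =>
      Module.finrank K
          ↥(LinearMap.ker (barB K n N M i) ⊓
              tensorGrade K GM (barDGrade K n N GN (i + 1)) j) -
        Module.finrank K
          ↥(LinearMap.range (barB K n N M (i + 1)) ⊓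
              tensorGrade K GM (barDGrade K n N GN (i + 1)) j)

/-- The quotient grading on `S/J`. -/
def quotGrade (J : Ideal (PS K n)) : ℤ → Submodule K (PS K n ⧸ J) := fun d =>
  (polyGrade K n d).map (Ideal.Quotient.mkₐ K J).toLinearMap

/-- The grading on an ideal `I ⊆ S` viewed as an `S`-module. -/
def idealGrade (I : Ideal (PS K n)) : ℤ → Submodule K ↥I := fun d =>
  (polyGrade K n d).comap ((Submodule.subtype I).restrictScalars K)

/-- `dim_K Tor_i^S(S/I, S/J)_j`. -/
def torQQ (I J : Ideal (PS K n)) (i : ℕ) (j : ℤ) : ℕ :=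
  torStrandDim K n (PS K n ⧸ J) (PS K n ⧸ I) (quotGrade K n I) (quotGrade K n J) i j

/-- `dim_K Tor_i^S(I, S/J)_j`. -/
def torIQ (I J : Ideal (PS K n)) (i : ℕ) (j : ℤ) : ℕ :=
  torStrandDim K n (PS K n ⧸ J) ↥I (idealGrade K n I) (quotGrade K n J) i j

/-- A property `P` holds for a general (nonzero) scalar `λ ∈ K` if it holds on a nonempty
Zariski open subset of `K`; equivalently, outside the zero set of some nonzero polynomial.
(Since `{0}` is Zariski closed, it is equivalent to quantify over `λ ∈ Kˣ`.) -/
def generallyScalar (P : Kˣ → Prop) : Prop :=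
  ∃ F : Polynomial K, F ≠ 0 ∧ ∀ l : Kˣ, Polynomial.eval (l : K) F ≠ 0 → P l

/-- The diagonal change of coordinates `D_{λ,w} : x_i ↦ λ^{-w_i} x_i`. -/
def diagCoord (w : Fin n → ℕ) (l : Kˣ) : PS K n →ₐ[K] PS K n :=
  MvPolynomial.aeval (fun i => (((l⁻¹ : Kˣ) : K) ^ (w i)) • MvPolynomial.X i)

/-- The `w`-weight of an exponent vector: `∑ w_i m_i`. -/
def wdeg (w : Fin n → ℕ) (m : Fin n →₀ ℕ) : ℕ := ∑ i, w i * m i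

/-- The initial form `in_w(f)`: the sum of the terms of `f` of maximal `w`-weight. -/
def initialForm (w : Fin n → ℕ) (f : PS K n) : PS K n :=
  ∑ m ∈ f.support.filter (fun m => wdeg n w m = f.support.sup (wdeg n w)),
    MvPolynomial.monomial m (MvPolynomial.coeff m f)

/-- The initial ideal `in_w(I)` of `I` with respect to the weight order given by `w`. -/
def initialIdealW (w : Fin n → ℕ) (I : Ideal (PS K n)) : Ideal (PS K n) :=
  Ideal.span {g | ∃ f ∈ I, g = initialForm K n w f}

end

/-!
The strand of degree `j` of the bar complex of `(I, S/J)` has dimensions depending only on the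
Hilbert functions of `I` and `J`, so for ideals with fixed Hilbert functions `dim Tor_i(I, S/J)_j`
can only drop when the ranks of the bar differentials grow. Moreover these ranks are lower
semicontinuous: if `I` and `J` move in polynomial families with constant Hilbert functions, the
rank at a given point is at most the rank on a Zariski neighbourhood of it.

Gröbner degeneration deforms `in_w(I)` and `in_{w'}(J)` into the translates `g(I)` and `g'(J)` by
one-parameter tori, so the ranks for `(in_w(I), in_{w'}(J))` are at most those for `(g(I), g'(J))`,
hence for `(I, g₀(J))` with `g₀ = g⁻¹g'`. Semicontinuity around `g₀` in the space of all matrices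
now extends the bound to `(I, g(J))` with `g` general. Only finitely many differentials matter:
`Tor_i(I, S/J)_j = 0` for `i > j`.
-/

/-! ### Graded vector spaces -/

noncomputable section

variable {K : Type} [Field K]
variable {A B A' B' : Type} [AddCommGroup A] [Module K A] [AddCommGroup B] [Module K B]
  [AddCommGroup A'] [Module K A'] [AddCommGroup B'] [Module K B']
variable {GA : ℤ → Submodule K A} {GB : ℤ → Submodule K B}
  {GA' : ℤ → Submodule K A'} {GB' : ℤ → Submodule K B'}

theorem tmul_mem_tensorGrade {p q d : ℤ} (h : p + q = d) {a : A} {b : B} (ha : a ∈ GA p)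
    (hb : b ∈ GB q) : a ⊗ₜ[K] b ∈ tensorGrade K GA GB d := by
  obtain rfl : q = d - p := by omega
  exact Submodule.mem_iSup_of_mem p ⟨⟨a, ha⟩ ⊗ₜ ⟨b, hb⟩, by simp⟩

theorem tensorGrade_le {d : ℤ} {W : Submodule K (A ⊗[K] B)}
    (h : ∀ p q, p + q = d → ∀ a ∈ GA p, ∀ b ∈ GB q, a ⊗ₜ[K] b ∈ W) :
    tensorGrade K GA GB d ≤ W := by
  refine iSup_le fun p => LinearMap.range_le_iff_comap.2 <| top_unique ?_
  rw [← TensorProduct.span_tmul_eq_top, Submodule.span_le]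
  rintro _ ⟨a, b, rfl⟩
  exact h p (d - p) (by omega) a a.2 b b.2

theorem map_tensorGrade_le (f : A →ₗ[K] A') (g : B →ₗ[K] B')
    (hf : ∀ p, (GA p).map f ≤ GA' p) (hg : ∀ p, (GB p).map g ≤ GB' p) (d : ℤ) :
    (tensorGrade K GA GB d).map (TensorProduct.map f g) ≤ tensorGrade K GA' GB' d :=
  Submodule.map_le_iff_le_comap.2 <| tensorGrade_le fun p q h _ ha _ hb =>
    tmul_mem_tensorGrade h (hf p ⟨_, ha, rfl⟩) (hg q ⟨_, hb, rfl⟩)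

theorem map_tensorGrade_eq (f : A →ₗ[K] A') (g : B →ₗ[K] B')
    (hf : ∀ p, (GA p).map f = GA' p) (hg : ∀ p, (GB p).map g = GB' p) (d : ℤ) :
    (tensorGrade K GA GB d).map (TensorProduct.map f g) = tensorGrade K GA' GB' d := by
  refine (map_tensorGrade_le f g (fun p => (hf p).le) (fun p => (hg p).le) d).antisymm
    (tensorGrade_le fun p q h _ ha' _ hb' => ?_)
  obtain ⟨a, ha, rfl⟩ := (hf p).ge ha'
  obtain ⟨b, hb, rfl⟩ := (hg q).ge hb'
  exact ⟨a ⊗ₜ b, tmul_mem_tensorGrade h ha hb, TensorProduct.map_tmul ..⟩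

theorem tensorGrade_eq_bot {d e j : ℤ} (hA : ∀ p < d, GA p = ⊥) (hB : ∀ q < e, GB q = ⊥)
    (hj : j < d + e) : tensorGrade K GA GB j = ⊥ := by
  refine eq_bot_iff.2 (tensorGrade_le fun p q hpq a ha b hb => ?_)
  rw [Submodule.mem_bot]
  rcases lt_or_ge p d with hp | hp
  · rw [hA p hp, Submodule.mem_bot] at ha
    rw [ha, TensorProduct.zero_tmul]
  · rw [hB q (by omega), Submodule.mem_bot] at hb
    rw [hb, TensorProduct.tmul_zero]

/-- A `ℤ`-grading of a vector space, concentrated in nonnegative degrees and with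
finite-dimensional pieces. -/
structure IsFiniteGrading (G : ℤ → Submodule K A) : Prop where
  isInternal : DirectSum.IsInternal G
  eq_bot_of_neg : ∀ p < 0, G p = ⊥
  finiteDimensional : ∀ p, FiniteDimensional K (G p)

theorem finrank_map_of_injective (f : A →ₗ[K] B) (hf : Function.Injective f)
    (p : Submodule K A) : Module.finrank K (p.map f) = Module.finrank K p :=
  (Submodule.equivMapOfInjective f hf p).finrank_eq.symm

theorem finrank_map_add_finrank_ker_inf (f : A →ₗ[K] B) (p : Submodule K A)
    [FiniteDimensional K p] :
    Module.finrank K (p.map f) + Module.finrank K (LinearMap.ker f ⊓ p : Submodule K A) =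
      Module.finrank K p := by
  rw [← (f.domRestrict p).finrank_range_add_finrank_ker, LinearMap.range_domRestrict,
    LinearMap.ker_domRestrict, ← Submodule.finrank_map_subtype_eq p, Submodule.map_comap_subtype,
    inf_comm]

theorem isInternal_of_projections (G : ℤ → Submodule K A) (π : ℤ → A →ₗ[K] A)
    (hπ : ∀ p, ∀ x ∈ G p, π p x = x) (hπ_ne : ∀ p q, q ≠ p → ∀ x ∈ G q, π p x = 0)
    (hG : iSup G = ⊤) : DirectSum.IsInternal G := by
  refine (DirectSum.isInternal_submodule_iff_iSupIndep_and_iSup_eq_top G).2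
    ⟨fun p => Submodule.disjoint_def.2 fun x hx hx' => ?_, hG⟩
  have hker : ⨆ (q) (_ : q ≠ p), G q ≤ LinearMap.ker (π p) := iSup₂_le (hπ_ne p)
  rw [← hπ p x hx]
  exact hker hx'

namespace IsFiniteGrading

theorem exists_projection (h : IsFiniteGrading GA) (p : ℤ) : ∃ π : A →ₗ[K] A,
    (∀ x, π x ∈ GA p) ∧ (∀ x ∈ GA p, π x = x) ∧ ∀ q, q ≠ p → ∀ x ∈ GA q, π x = 0 := by
  let _ := h.isInternal.chooseDecomposition
  refine ⟨(GA p).subtype ∘ₗ DirectSum.component K ℤ (fun q => GA q) p ∘ₗ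
    (DirectSum.decomposeLinearEquiv GA).toLinearMap, fun x => Subtype.prop _, fun x hx => ?_,
    fun q hq x hx => ?_⟩
  · exact DirectSum.decompose_of_mem_same GA hx
  · exact DirectSum.decompose_of_mem_ne GA hx hq

theorem linearMap_ext (h : IsFiniteGrading GA) {f g : A →ₗ[K] B}
    (hfg : ∀ p, ∀ x ∈ GA p, f x = g x) : f = g :=
  LinearMap.ext fun x => by
    have hx : x ∈ iSup GA := h.isInternal.submodule_iSup_eq_top ▸ Submodule.mem_top
    exact (iSup_le hfg : iSup GA ≤ LinearMap.eqLocus f g) hx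

theorem exists_mem_of_apply_mem (hA : IsFiniteGrading GA) (hB : IsFiniteGrading GB)
    (f : A →ₗ[K] B) (hf : ∀ p, (GA p).map f ≤ GB p) {p : ℤ} {x : A} (hx : f x ∈ GB p) :
    ∃ y ∈ GA p, f y = f x := by
  obtain ⟨π, hπ_mem, hπ, hπ_ne⟩ := hA.exists_projection p
  obtain ⟨ρ, -, hρ, hρ_ne⟩ := hB.exists_projection p
  have hcomm : f ∘ₗ π = ρ ∘ₗ f := hA.linearMap_ext fun q a ha => by
    have hfa : f a ∈ GB q := hf q ⟨a, ha, rfl⟩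
    rcases eq_or_ne q p with rfl | hq
    · simp [hπ a ha, hρ _ hfa]
    · simp [hπ_ne q hq a ha, hρ_ne q hq _ hfa]
  exact ⟨π x, hπ_mem x, (LinearMap.congr_fun hcomm x).trans (hρ _ hx)⟩

theorem exists_linearEquiv (h : IsFiniteGrading GA) (h' : IsFiniteGrading GA')
    (hfin : ∀ p, Module.finrank K (GA p) = Module.finrank K (GA' p)) :
    ∃ e : A ≃ₗ[K] A', ∀ p, (GA p).map e.toLinearMap = GA' p := by
  let _ := h.isInternal.chooseDecomposition
  let _ := h'.isInternal.chooseDecomposition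
  have := h.finiteDimensional
  have := h'.finiteDimensional
  let e (p : ℤ) : GA p ≃ₗ[K] GA' p := LinearEquiv.ofFinrankEq _ _ (hfin p)
  let E : A ≃ₗ[K] A' := DirectSum.decomposeLinearEquiv GA ≪≫ₗ
    DFinsupp.mapRange.linearEquiv e ≪≫ₗ (DirectSum.decomposeLinearEquiv GA').symm
  have hE (p : ℤ) (x : GA p) : E x = e p x := by
    change (DirectSum.decompose GA').symm (DFinsupp.mapRange (fun q => e q)
      (fun q => map_zero (e q)) (DirectSum.decompose GA (x : A))) = _
    rw [DirectSum.decompose_coe, DirectSum.of, DFinsupp.singleAddHom_apply,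
      DFinsupp.mapRange_single]
    exact DirectSum.decompose_symm_of GA' _
  refine ⟨E, fun p => Submodule.ext fun y => ⟨?_, fun hy => ?_⟩⟩
  · rintro ⟨x, hx, rfl⟩
    exact hE p ⟨x, hx⟩ ▸ (e p _).2
  · exact ⟨(e p).symm ⟨y, hy⟩, Subtype.prop _, by simp [hE]⟩

theorem iSup_tensorGrade (hA : IsFiniteGrading GA) (hB : IsFiniteGrading GB) :
    ⨆ d, tensorGrade K GA GB d = ⊤ := by
  rw [eq_top_iff, ← TensorProduct.map₂_mk_top_top_eq_top,
    ← hA.isInternal.submodule_iSup_eq_top, ← hB.isInternal.submodule_iSup_eq_top,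
    Submodule.map₂_iSup_left]
  refine iSup_le fun p => ?_
  rw [Submodule.map₂_iSup_right]
  exact iSup_le fun q => Submodule.map₂_le.2 fun a ha b hb =>
    Submodule.mem_iSup_of_mem (p + q) (tmul_mem_tensorGrade rfl ha hb)

theorem tmul_eq_zero_of_notMem (hA : IsFiniteGrading GA) (hB : IsFiniteGrading GB) {p q : ℤ}
    (hp : p ∉ Finset.Icc 0 (p + q)) {a : A} {b : B} (ha : a ∈ GA p) (hb : b ∈ GB q) :
    a ⊗ₜ[K] b = 0 := by
  rw [Finset.mem_Icc, not_and_or, not_le, not_le] at hp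
  rcases hp with hp | hq
  · rw [hA.eq_bot_of_neg p hp, Submodule.mem_bot] at ha
    rw [ha, TensorProduct.zero_tmul]
  · rw [hB.eq_bot_of_neg q (by omega), Submodule.mem_bot] at hb
    rw [hb, TensorProduct.tmul_zero]

theorem isInternal_tensorGrade (hA : IsFiniteGrading GA) (hB : IsFiniteGrading GB) :
    DirectSum.IsInternal (tensorGrade K GA GB) := by
  choose π _ hπ hπ_ne using hA.exists_projection
  choose ρ _ hρ hρ_ne using hB.exists_projection
  let τ (d : ℤ) : A ⊗[K] B →ₗ[K] A ⊗[K] B :=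
    ∑ p ∈ Finset.Icc 0 d, TensorProduct.map (π p) (ρ (d - p))
  have hτ (d p q : ℤ) (a : A) (ha : a ∈ GA p) (b : B) (hb : b ∈ GB q) :
      τ d (a ⊗ₜ b) = if p ∈ Finset.Icc 0 d ∧ q = d - p then a ⊗ₜ b else 0 := by
    have hterm (r : ℤ) : π r a ⊗ₜ[K] ρ (d - r) b =
        if p = r then if q = d - p then a ⊗ₜ b else 0 else 0 := by
      split_ifs with hr hq
      · rw [← hr, hπ p a ha, hρ _ b (hq ▸ hb)]
      · rw [← hr, hρ_ne _ q hq b hb, TensorProduct.tmul_zero]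
      · rw [hπ_ne r p hr a ha, TensorProduct.zero_tmul]
    simp only [τ, LinearMap.sum_apply, TensorProduct.map_tmul, hterm, Finset.sum_ite_eq, ite_and]
  refine isInternal_of_projections _ τ (fun d x hx => ?_) (fun d e hde x hx => ?_)
    (hA.iSup_tensorGrade hB)
  · refine (tensorGrade_le fun p q hpq a ha b hb => ?_ :
      tensorGrade K GA GB d ≤ LinearMap.eqLocus (τ d) LinearMap.id) hx
    change τ d (a ⊗ₜ b) = a ⊗ₜ b
    rw [hτ d p q a ha b hb, ite_eq_left_iff]
    intro hp
    exact (hA.tmul_eq_zero_of_notMem hB (fun h => hp ⟨hpq ▸ h, by omega⟩) ha hb).symm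
  · refine (tensorGrade_le fun p q hpq a ha b hb => ?_ :
      tensorGrade K GA GB e ≤ LinearMap.ker (τ d)) hx
    rw [LinearMap.mem_ker, hτ d p q a ha b hb, if_neg fun h => hde (by omega)]

theorem tensor (hA : IsFiniteGrading GA) (hB : IsFiniteGrading GB) :
    IsFiniteGrading (tensorGrade K GA GB) where
  isInternal := hA.isInternal_tensorGrade hB
  eq_bot_of_neg d hd := tensorGrade_eq_bot hA.eq_bot_of_neg hB.eq_bot_of_neg (by omega)
  finiteDimensional d := by
    have := hA.finiteDimensional
    have := hB.finiteDimensional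
    refine Submodule.finiteDimensional_of_le (S₂ := (Finset.Icc 0 d).sup fun p =>
      LinearMap.range (TensorProduct.map (GA p).subtype (GB (d - p)).subtype))
      (tensorGrade_le fun p q hpq a ha b hb => ?_)
    obtain rfl : q = d - p := by omega
    by_cases hp : p ∈ Finset.Icc 0 d
    · exact Finset.le_sup (f := fun p => LinearMap.range (TensorProduct.map (GA p).subtype _)) hp
        ⟨⟨a, ha⟩ ⊗ₜ ⟨b, hb⟩, TensorProduct.map_tmul ..⟩
    · rw [hA.tmul_eq_zero_of_notMem hB (by rwa [add_sub_cancel]) ha hb]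
      exact zero_mem _

theorem finrank_tensorGrade_eq (hA : IsFiniteGrading GA) (hB : IsFiniteGrading GB)
    (hA' : IsFiniteGrading GA') (hB' : IsFiniteGrading GB')
    (hfinA : ∀ p, Module.finrank K (GA p) = Module.finrank K (GA' p))
    (hfinB : ∀ p, Module.finrank K (GB p) = Module.finrank K (GB' p)) (d : ℤ) :
    Module.finrank K (tensorGrade K GA GB d) = Module.finrank K (tensorGrade K GA' GB' d) := by
  obtain ⟨e, he⟩ := hA.exists_linearEquiv hA' hfinA
  obtain ⟨e', he'⟩ := hB.exists_linearEquiv hB' hfinB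
  rw [← map_tensorGrade_eq e.toLinearMap e'.toLinearMap he he' d]
  exact (finrank_map_of_injective _ (TensorProduct.congr e e').injective _).symm

end IsFiniteGrading

end

/-! ### The bar differential -/

noncomputable section

variable {K : Type} [Field K] {n : ℕ}

theorem linearMap_ext_tmul_tmul {U V W E : Type} [AddCommGroup U] [Module K U] [AddCommGroup V]
    [Module K V] [AddCommGroup W] [Module K W] [AddCommGroup E] [Module K E]
    {f g : U ⊗[K] (V ⊗[K] W) →ₗ[K] E}
    (h : ∀ u v w, f (u ⊗ₜ[K] (v ⊗ₜ[K] w)) = g (u ⊗ₜ[K] (v ⊗ₜ[K] w))) : f = g :=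
  TensorProduct.ext <| LinearMap.ext fun u => TensorProduct.ext' fun v w => h u v w

theorem one_mem_polyGrade : (1 : PS K n) ∈ polyGrade K n 0 := by
  rw [polyGrade, if_pos le_rfl]
  exact isHomogeneous_one (Fin n) K

theorem polyGrade_eq_bot {p : ℤ} (hp : p < 0) : polyGrade K n p = ⊥ :=
  if_neg hp.not_ge

theorem mul_mem_polyGrade {p q : ℤ} {s t : PS K n} (hs : s ∈ polyGrade K n p)
    (ht : t ∈ polyGrade K n q) : s * t ∈ polyGrade K n (p + q) := by
  rcases lt_or_ge p 0 with hp | hp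
  · rw [polyGrade_eq_bot hp, Submodule.mem_bot] at hs
    simp [hs]
  rcases lt_or_ge q 0 with hq | hq
  · rw [polyGrade_eq_bot hq, Submodule.mem_bot] at ht
    simp [ht]
  rw [polyGrade, if_pos hp] at hs
  rw [polyGrade, if_pos hq] at ht
  rw [polyGrade, if_pos (add_nonneg hp hq), Int.toNat_add hp hq]
  exact IsHomogeneous.mul hs ht

instance : SetLike.GradedMonoid (polyGrade K n) where
  one_mem := one_mem_polyGrade
  mul_mem _ _ _ _ := mul_mem_polyGrade

section BarDiff

variable {D D' : Type} [AddCommGroup D] [Module K D] [AddCommGroup D'] [Module K D']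
variable {M : Type} [AddCommGroup M] [Module K M] [Module (PS K n) M]
  [IsScalarTower K (PS K n) M]
variable {M' : Type} [AddCommGroup M'] [Module K M'] [Module (PS K n) M']
  [IsScalarTower K (PS K n) M']

variable (M) in
/-- The common shape `m ⊗ s ⊗ t ↦ sm ⊗ t - m ⊗ c(s ⊗ t)` of the bar differential `barB` and of the
recursive step of the contraction `barC`. -/
def barDiff (c : PS K n ⊗[K] D →ₗ[K] D) : M ⊗[K] (PS K n ⊗[K] D) →ₗ[K] M ⊗[K] D :=
  (smulMapM K n M).rTensor D ∘ₗ (TensorProduct.assoc K M (PS K n) D).symm.toLinearMap -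
    c.lTensor M

theorem barDiff_tmul (c : PS K n ⊗[K] D →ₗ[K] D) (m : M) (s : PS K n) (t : D) :
    barDiff M c (m ⊗ₜ[K] (s ⊗ₜ[K] t)) = (s • m) ⊗ₜ[K] t - m ⊗ₜ[K] c (s ⊗ₜ[K] t) := rfl

/-- The condition that `s • t = c (s ⊗ t)` is a (not necessarily unital) action of `S` on `D`. -/
def IsAssociative (c : PS K n ⊗[K] D →ₗ[K] D) : Prop :=
  ∀ s s' t, c ((s * s') ⊗ₜ[K] t) = c (s ⊗ₜ[K] c (s' ⊗ₜ[K] t))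

theorem IsAssociative.barDiff {c : PS K n ⊗[K] D →ₗ[K] D} (hc : IsAssociative c) :
    IsAssociative (barDiff (PS K n) c) := by
  intro s s' u
  induction u using TensorProduct.induction_on with
  | zero => simp
  | tmul a t =>
    simp only [barDiff_tmul, tmul_sub, map_sub, smul_eq_mul, ← hc s' a t]
    rw [mul_comm s s', ← mul_assoc, mul_comm a s', mul_comm (s' * a) s]
    abel
  | add x y hx hy => simp only [tmul_add, map_add, hx, hy]

theorem barDiff_comp_barDiff {c : PS K n ⊗[K] D →ₗ[K] D} (hc : IsAssociative c) :
    barDiff M c ∘ₗ barDiff M (barDiff (PS K n) c) = 0 := by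
  refine linearMap_ext_tmul_tmul fun m s u => ?_
  induction u using TensorProduct.induction_on with
  | zero => simp
  | tmul a t =>
    simp only [LinearMap.comp_apply, LinearMap.zero_apply, barDiff_tmul, tmul_sub, map_sub,
      smul_eq_mul, ← hc s a t, mul_comm s a, mul_smul]
    abel
  | add x y hx hy => simp only [tmul_add, map_add, hx, hy]

theorem map_comp_barDiff {c : PS K n ⊗[K] D →ₗ[K] D} {c' : PS K n ⊗[K] D' →ₗ[K] D'}
    (h : PS K n →ₗ[K] PS K n) (f : M →ₗ[K] M') (ψ : D →ₗ[K] D')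
    (hf : ∀ s m, f (s • m) = h s • f m) (hψ : ψ ∘ₗ c = c' ∘ₗ TensorProduct.map h ψ) :
    TensorProduct.map f ψ ∘ₗ barDiff M c =
      barDiff M' c' ∘ₗ TensorProduct.map f (TensorProduct.map h ψ) :=
  linearMap_ext_tmul_tmul fun m s t => by
    have hψ' : ψ (c (s ⊗ₜ t)) = c' (h s ⊗ₜ ψ t) := LinearMap.congr_fun hψ (s ⊗ₜ t)
    simp only [LinearMap.comp_apply, barDiff_tmul, map_sub, TensorProduct.map_tmul, hf, hψ']

theorem map_barDiff_tensorGrade_le {c : PS K n ⊗[K] D →ₗ[K] D} {GM : ℤ → Submodule K M}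
    {GD : ℤ → Submodule K D} [SetLike.GradedSMul (polyGrade K n) GM]
    (hc : ∀ p, (tensorGrade K (polyGrade K n) GD p).map c ≤ GD p) (p : ℤ) :
    (tensorGrade K GM (tensorGrade K (polyGrade K n) GD) p).map (barDiff M c) ≤
      tensorGrade K GM GD p := by
  refine Submodule.map_le_iff_le_comap.2 (tensorGrade_le fun q r hqr m hm u hu => ?_)
  refine (tensorGrade_le fun a b hab s hs t ht => ?_ : tensorGrade K (polyGrade K n) GD r ≤
    ((tensorGrade K GM GD p).comap (barDiff M c)).comap (TensorProduct.mk K M _ m)) hu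
  refine sub_mem (tmul_mem_tensorGrade (p := a + q) (by omega) ?_ ht)
    (tmul_mem_tensorGrade hqr hm (hc r ⟨_, tmul_mem_tensorGrade hab hs ht, rfl⟩))
  exact SetLike.GradedSMul.smul_mem hs hm

end BarDiff

section BarComplex

variable {M : Type} [AddCommGroup M] [Module K M] [Module (PS K n) M]
  [IsScalarTower K (PS K n) M]
variable {N : Type} [AddCommGroup N] [Module K N] [Module (PS K n) N]
  [IsScalarTower K (PS K n) N]

theorem barB_eq_barDiff (i : ℕ) : barB K n N M i = barDiff M (barC K n N i) := rfl

theorem barC_succ (i : ℕ) : barC K n N (i + 1) = barDiff (PS K n) (barC K n N i) := by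
  have hmul : LinearMap.mul' K (PS K n) = smulMapM K n (PS K n) :=
    TensorProduct.ext' fun a b => mul_comm a b
  rw [barC, hmul]
  rfl

theorem isAssociative_barC : ∀ i : ℕ, IsAssociative (barC K n N i)
  | 0 => fun s s' (t : N) => mul_smul s s' t
  | i + 1 => barC_succ (K := K) (n := n) (N := N) i ▸ (isAssociative_barC i).barDiff

theorem barB_comp_barB (i : ℕ) : barB K n N M i ∘ₗ barB K n N M (i + 1) = 0 := by
  rw [barB_eq_barDiff, barB_eq_barDiff, barC_succ]
  exact barDiff_comp_barDiff (isAssociative_barC i)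

theorem map_barC_barDGrade_le {GN : ℤ → Submodule K N}
    [SetLike.GradedSMul (polyGrade K n) GN] (i : ℕ) (p : ℤ) :
    (tensorGrade K (polyGrade K n) (barDGrade K n N GN i) p).map (barC K n N i) ≤
      barDGrade K n N GN i p := by
  induction i generalizing p with
  | zero =>
    refine Submodule.map_le_iff_le_comap.2 (tensorGrade_le fun q r hqr s hs (m : N)
      (hm : m ∈ GN r) => ?_)
    have hsm : s • m ∈ GN (q + r) := SetLike.GradedSMul.smul_mem hs hm
    exact hqr ▸ hsm
  | succ i ih =>
    rw [barC_succ]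
    exact map_barDiff_tensorGrade_le ih p

theorem map_barB_tensorGrade_le {GM : ℤ → Submodule K M} {GN : ℤ → Submodule K N}
    [SetLike.GradedSMul (polyGrade K n) GM] [SetLike.GradedSMul (polyGrade K n) GN]
    (i : ℕ) (p : ℤ) :
    (tensorGrade K GM (barDGrade K n N GN (i + 1)) p).map (barB K n N M i) ≤
      tensorGrade K GM (barDGrade K n N GN i) p :=
  map_barDiff_tensorGrade_le (map_barC_barDGrade_le i) p

end BarComplex

section BarMap

variable {N N' N'' : Type} [AddCommGroup N] [Module K N] [AddCommGroup N'] [Module K N']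
  [AddCommGroup N''] [Module K N'']

/-- The map `h^{⊗ i} ⊗ φ` from `S^{⊗ i} ⊗ N` to `S^{⊗ i} ⊗ N'`. -/
def barMap (h : PS K n →ₗ[K] PS K n) (φ : N →ₗ[K] N') :
    (i : ℕ) → barD K n N i →ₗ[K] barD K n N' i
  | 0 => φ
  | i + 1 => TensorProduct.map h (barMap h φ i)

theorem map_barMap_barDGrade_le {GN : ℤ → Submodule K N} {GN' : ℤ → Submodule K N'}
    (h : PS K n →ₗ[K] PS K n) (φ : N →ₗ[K] N')
    (hh : ∀ p, (polyGrade K n p).map h ≤ polyGrade K n p) (hφ : ∀ p, (GN p).map φ ≤ GN' p)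
    (i : ℕ) (p : ℤ) : (barDGrade K n N GN i p).map (barMap h φ i) ≤ barDGrade K n N' GN' i p := by
  induction i generalizing p with
  | zero => exact hφ p
  | succ i ih => exact map_tensorGrade_le h (barMap h φ i) hh ih p

theorem map_barMap_barDGrade_eq {GN : ℤ → Submodule K N} {GN' : ℤ → Submodule K N'}
    (h : PS K n →ₗ[K] PS K n) (φ : N →ₗ[K] N')
    (hh : ∀ p, (polyGrade K n p).map h = polyGrade K n p) (hφ : ∀ p, (GN p).map φ = GN' p)
    (i : ℕ) (p : ℤ) : (barDGrade K n N GN i p).map (barMap h φ i) = barDGrade K n N' GN' i p := by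
  induction i generalizing p with
  | zero => exact hφ p
  | succ i ih => exact map_tensorGrade_eq h (barMap h φ i) hh ih p

theorem barMap_injective (h : PS K n →ₗ[K] PS K n) (φ : N →ₗ[K] N')
    (hh : Function.Injective h) (hφ : Function.Injective φ) :
    ∀ i, Function.Injective (barMap h φ i)
  | 0 => hφ
  | i + 1 => TensorProduct.map_injective_of_flat_flat h _ hh (barMap_injective h φ hh hφ i)

theorem barMap_surjective (h : PS K n →ₗ[K] PS K n) (φ : N →ₗ[K] N')
    (hh : Function.Surjective h) (hφ : Function.Surjective φ) :
    ∀ i, Function.Surjective (barMap h φ i)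
  | 0 => hφ
  | i + 1 => TensorProduct.map_surjective hh (barMap_surjective h φ hh hφ i)

theorem barMap_id_exact (φ : N →ₗ[K] N') (ψ : N' →ₗ[K] N'') (hψ : Function.Surjective ψ)
    (hφψ : Function.Exact φ ψ) :
    ∀ i, Function.Exact (barMap (n := n) LinearMap.id φ i) (barMap (n := n) LinearMap.id ψ i)
  | 0 => hφψ
  | i + 1 => lTensor_exact (PS K n) (barMap_id_exact φ ψ hψ hφψ i)
      (barMap_surjective LinearMap.id ψ Function.surjective_id hψ i)

variable [Module (PS K n) N] [IsScalarTower K (PS K n) N]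
  [Module (PS K n) N'] [IsScalarTower K (PS K n) N']

theorem barMap_comp_barC (h : PS K n →ₐ[K] PS K n) (φ : N →ₗ[K] N')
    (hφ : ∀ (s : PS K n) x, φ (s • x) = h s • φ x) (i : ℕ) :
    barMap h.toLinearMap φ i ∘ₗ barC K n N i =
      barC K n N' i ∘ₗ TensorProduct.map h.toLinearMap (barMap h.toLinearMap φ i) := by
  induction i with
  | zero => exact TensorProduct.ext' hφ
  | succ i ih =>
    rw [barC_succ, barC_succ]
    exact map_comp_barDiff h.toLinearMap h.toLinearMap _ (map_mul h) ih

variable {M : Type} [AddCommGroup M] [Module K M] [Module (PS K n) M]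
  [IsScalarTower K (PS K n) M]
variable {M' : Type} [AddCommGroup M'] [Module K M'] [Module (PS K n) M']
  [IsScalarTower K (PS K n) M']

theorem map_comp_barB (h : PS K n →ₐ[K] PS K n) (f : M →ₗ[K] M') (φ : N →ₗ[K] N')
    (hf : ∀ (s : PS K n) m, f (s • m) = h s • f m)
    (hφ : ∀ (s : PS K n) x, φ (s • x) = h s • φ x) (i : ℕ) :
    TensorProduct.map f (barMap h.toLinearMap φ i) ∘ₗ barB K n N M i =
      barB K n N' M' i ∘ₗ TensorProduct.map f (barMap h.toLinearMap φ (i + 1)) :=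
  map_comp_barDiff h.toLinearMap f _ hf (barMap_comp_barC h φ hφ i)

theorem rTensor_comp_barB (f : M →ₗ[PS K n] M') (i : ℕ) :
    (f.restrictScalars K).rTensor (barD K n N i) ∘ₗ barB K n N M i =
      barB K n N M' i ∘ₗ (f.restrictScalars K).rTensor (barD K n N (i + 1)) := by
  have h := map_comp_barDiff (c := barC K n N i) (c' := barC K n N i) LinearMap.id
    (f.restrictScalars K) LinearMap.id (map_smul f) (by rw [TensorProduct.map_id]; rfl)
  rwa [TensorProduct.map_id] at h

end BarMap

end

/-! ### Vanishing of low-degree homology -/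

noncomputable section

variable {K : Type} [Field K] {n : ℕ}
variable {N : Type} [AddCommGroup N] [Module K N] [Module (PS K n) N]
  [IsScalarTower K (PS K n) N]

variable (K n N) in
/-- The `i`-cycles of the bar complex; all of `M ⊗ N` for `i = 0`. -/
def barCycles (M : Type) [AddCommGroup M] [Module K M] [Module (PS K n) M]
    [IsScalarTower K (PS K n) M] : (i : ℕ) → Submodule K (M ⊗[K] barD K n N i)
  | 0 => ⊤
  | i + 1 => LinearMap.ker (barB K n N M i)

theorem range_barB_le_barCycles {M : Type} [AddCommGroup M] [Module K M] [Module (PS K n) M]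
    [IsScalarTower K (PS K n) M] : ∀ i, LinearMap.range (barB K n N M i) ≤ barCycles K n N M i
  | 0 => le_top
  | i + 1 => LinearMap.range_le_ker_iff.2 (barB_comp_barB i)

section Homotopy

variable {M D : Type} [AddCommGroup M] [Module K M] [AddCommGroup D] [Module K D]

variable (K n M D) in
/-- The contracting homotopy `(s ⊗ m) ⊗ t ↦ (1 ⊗ m) ⊗ (s ⊗ t)` of the bar complex of an induced
module. -/
def inducedHomotopy :
    (PS K n ⊗[K] M) ⊗[K] D →ₗ[K] (PS K n ⊗[K] M) ⊗[K] (PS K n ⊗[K] D) :=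
  (TensorProduct.mk K (PS K n) M 1).rTensor (PS K n ⊗[K] D) ∘ₗ
    (TensorProduct.assoc K M (PS K n) D).toLinearMap ∘ₗ
      (TensorProduct.comm K (PS K n) M).toLinearMap.rTensor D

theorem inducedHomotopy_tmul (s : PS K n) (m : M) (t : D) :
    inducedHomotopy K n M D ((s ⊗ₜ[K] m) ⊗ₜ[K] t) = ((1 : PS K n) ⊗ₜ[K] m) ⊗ₜ[K] (s ⊗ₜ[K] t) :=
  rfl

theorem barDiff_inducedHomotopy (c : PS K n ⊗[K] D →ₗ[K] D) :
    barDiff (PS K n ⊗[K] M) (barDiff (PS K n) c) ∘ₗ inducedHomotopy K n M (PS K n ⊗[K] D) +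
      inducedHomotopy K n M D ∘ₗ barDiff (PS K n ⊗[K] M) c = LinearMap.id := by
  refine linearMap_ext_tmul_tmul (K := K) (U := PS K n ⊗[K] M) (V := PS K n) (W := D)
    (E := (PS K n ⊗[K] M) ⊗[K] (PS K n ⊗[K] D)) fun a s t => ?_
  induction a using TensorProduct.induction_on with
  | zero => simp
  | tmul s' m =>
    simp only [LinearMap.add_apply, LinearMap.comp_apply, barDiff_tmul, map_sub,
      inducedHomotopy_tmul, LinearMap.id_apply, tmul_sub, smul_tmul', smul_eq_mul, mul_one]
    abel
  | add x y hx hy => simp only [add_tmul, map_add, hx, hy]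

theorem barCycles_induced_le_range (i : ℕ) :
    barCycles K n N (PS K n ⊗[K] M) (i + 1) ≤
      LinearMap.range (barB K n N (PS K n ⊗[K] M) (i + 1)) := by
  intro y (hy : barDiff _ (barC K n N i) y = 0)
  have h : barDiff _ (barDiff _ (barC K n N i)) (inducedHomotopy K n M _ y) +
      inducedHomotopy K n M _ (barDiff _ (barC K n N i) y) = y :=
    LinearMap.congr_fun (barDiff_inducedHomotopy (barC K n N i)) y
  rw [hy, map_zero, add_zero, ← barC_succ] at h
  exact ⟨_, h⟩

section Graded

variable {GM : ℤ → Submodule K M}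

instance gradedSMul_tensorGrade :
    SetLike.GradedSMul (polyGrade K n) (tensorGrade K (polyGrade K n) GM) where
  smul_mem p q s a hs ha := by
    refine (tensorGrade_le fun q' r hq' s' hs' m hm => ?_ : tensorGrade K (polyGrade K n) GM q ≤
      (tensorGrade K (polyGrade K n) GM (p + q)).comap
        (DistribSMul.toLinearMap K (PS K n ⊗[K] M) s)) ha
    change s • (s' ⊗ₜ[K] m) ∈ tensorGrade K (polyGrade K n) GM (p + q)
    rw [smul_tmul', smul_eq_mul]
    exact tmul_mem_tensorGrade (by omega) (mul_mem_polyGrade hs hs') hm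

theorem map_mk_one_le (p : ℤ) :
    (GM p).map (TensorProduct.mk K (PS K n) M 1) ≤ tensorGrade K (polyGrade K n) GM p :=
  Submodule.map_le_iff_le_comap.2 fun _ hm =>
    tmul_mem_tensorGrade (zero_add p) one_mem_polyGrade hm

end Graded

end Homotopy

variable {M : Type} [AddCommGroup M] [Module K M] [Module (PS K n) M]
  [IsScalarTower K (PS K n) M]
variable {M' : Type} [AddCommGroup M'] [Module K M'] [Module (PS K n) M']
  [IsScalarTower K (PS K n) M']

theorem rTensor_mem_barCycles_iff {f : M →ₗ[PS K n] M'} (hf : Function.Injective f) :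
    ∀ {i : ℕ} {x : M ⊗[K] barD K n N i},
      (f.restrictScalars K).rTensor (barD K n N i) x ∈ barCycles K n N M' i ↔
        x ∈ barCycles K n N M i
  | 0, _ => Iff.rfl
  | i + 1, x => by
    have hinj : Function.Injective ((f.restrictScalars K).rTensor (barD K n N i)) :=
      Module.Flat.rTensor_preserves_injective_linearMap _ hf
    change barB K n N M' i _ = 0 ↔ barB K n N M i x = 0
    rw [← LinearMap.comp_apply, ← rTensor_comp_barB, LinearMap.comp_apply, map_eq_zero_iff _ hinj]

variable (K n M) in
/-- The action map `S ⊗ M → M`. -/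
def actionMap : PS K n ⊗[K] M →ₗ[PS K n] M :=
  (LinearMap.id : M →ₗ[K] M).liftBaseChange (PS K n)

theorem actionMap_tmul (s : PS K n) (m : M) : actionMap K n M (s ⊗ₜ m) = s • m :=
  LinearMap.liftBaseChange_tmul ..

variable (K n M) in
/-- The kernel of `S ⊗ M → M`, through which the bar homology of `M` is shifted down. -/
abbrev inducedSyzygy : Submodule (PS K n) (PS K n ⊗[K] M) := LinearMap.ker (actionMap K n M)

variable (K n M) in
/-- The `K`-linear retraction `a ↦ a - 1 ⊗ act(a)` of `S ⊗ M` onto the kernel of the action. -/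
def syzygyRetraction : PS K n ⊗[K] M →ₗ[K] inducedSyzygy K n M :=
  LinearMap.codRestrict ((inducedSyzygy K n M).restrictScalars K)
    (LinearMap.id - TensorProduct.mk K (PS K n) M 1 ∘ₗ (actionMap K n M).restrictScalars K)
    fun a => by
      change actionMap K n M (a - (1 : PS K n) ⊗ₜ[K] actionMap K n M a) = 0
      rw [map_sub, actionMap_tmul, one_smul, sub_self]

theorem coe_syzygyRetraction (a : PS K n ⊗[K] M) :
    (syzygyRetraction K n M a : PS K n ⊗[K] M) = a - 1 ⊗ₜ[K] actionMap K n M a := rfl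

section Connecting

variable {L : Type} [AddCommGroup L] [Module K L] [Module (PS K n) L] [IsScalarTower K (PS K n) L]

/-- A bar cycle `x` becomes a boundary over `S ⊗ M` of an element with boundary in the syzygy
module; if the latter is itself a boundary there, it can be corrected away. -/
theorem mem_range_barB_of_connecting {ι : L →ₗ[PS K n] PS K n ⊗[K] M}
    (hι : actionMap K n M ∘ₗ ι = 0) {i : ℕ} {x : M ⊗[K] barD K n N (i + 1)}
    {z : L ⊗[K] barD K n N i}
    (hz : (ι.restrictScalars K).rTensor (barD K n N i) z =
      barB K n N (PS K n ⊗[K] M) i ((TensorProduct.mk K (PS K n) M 1).rTensor _ x))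
    (hzr : z ∈ LinearMap.range (barB K n N L i)) :
    x ∈ LinearMap.range (barB K n N M (i + 1)) := by
  obtain ⟨w, rfl⟩ := hzr
  let ι' := (ι.restrictScalars K).rTensor (barD K n N (i + 1))
  let η := (TensorProduct.mk K (PS K n) M 1).rTensor (barD K n N (i + 1))
  let act := ((actionMap K n M).restrictScalars K).rTensor (barD K n N (i + 1))
  have hact_η : act ∘ₗ η = LinearMap.id :=
    TensorProduct.ext' fun m t => by simp [act, η, actionMap_tmul]
  have hact_ι : act ∘ₗ ι' = 0 := TensorProduct.ext' fun a t => by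
    simp [act, ι', show actionMap K n M (ι a) = 0 from LinearMap.congr_fun hι a]
  have hcycle : η x - ι' w ∈ barCycles K n N (PS K n ⊗[K] M) (i + 1) := by
    change barB K n N (PS K n ⊗[K] M) i (η x - ι' w) = 0
    rw [map_sub, sub_eq_zero]
    exact hz.symm.trans (LinearMap.congr_fun (rTensor_comp_barB ι i) w)
  obtain ⟨v, hv⟩ := barCycles_induced_le_range i hcycle
  have hcomm := LinearMap.congr_fun (rTensor_comp_barB (N := N) (actionMap K n M) (i + 1)) v
  refine ⟨((actionMap K n M).restrictScalars K).rTensor _ v, hcomm.symm.trans ?_⟩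
  change act (barB K n N (PS K n ⊗[K] M) (i + 1) v) = x
  rw [hv, map_sub]
  change (act ∘ₗ η) x - (act ∘ₗ ι') w = x
  rw [hact_η, hact_ι, LinearMap.id_apply, LinearMap.zero_apply, sub_zero]

theorem rTensor_retraction_of_cycle {ι : L →ₗ[PS K n] PS K n ⊗[K] M}
    {ρ : PS K n ⊗[K] M →ₗ[K] L} (hρ : ∀ a, ι (ρ a) = a - 1 ⊗ₜ[K] actionMap K n M a) {i : ℕ}
    {x : M ⊗[K] barD K n N (i + 1)} (hx : x ∈ barCycles K n N M (i + 1)) :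
    (ι.restrictScalars K).rTensor (barD K n N i) (ρ.rTensor _
        (barB K n N (PS K n ⊗[K] M) i ((TensorProduct.mk K (PS K n) M 1).rTensor _ x))) =
      barB K n N (PS K n ⊗[K] M) i ((TensorProduct.mk K (PS K n) M 1).rTensor _ x) := by
  have hret (u : (PS K n ⊗[K] M) ⊗[K] barD K n N i)
      (hu : ((actionMap K n M).restrictScalars K).rTensor _ u = 0) :
      (ι.restrictScalars K).rTensor _ (ρ.rTensor _ u) = u := by
    have h : (ι.restrictScalars K).rTensor _ ∘ₗ ρ.rTensor (barD K n N i) +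
        (TensorProduct.mk K (PS K n) M 1).rTensor _ ∘ₗ
          ((actionMap K n M).restrictScalars K).rTensor (barD K n N i) = LinearMap.id :=
      TensorProduct.ext' fun a t => by simp [hρ, ← add_tmul]
    simpa [hu] using LinearMap.congr_fun h u
  have hact : ((actionMap K n M).restrictScalars K).rTensor (barD K n N (i + 1))
      ((TensorProduct.mk K (PS K n) M 1).rTensor _ x) = x := by
    rw [← LinearMap.comp_apply, ← LinearMap.rTensor_comp]
    convert LinearMap.rTensor_id_apply _ _ x
    exact LinearMap.ext fun m => by simp [actionMap_tmul]
  refine hret _ ?_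
  have hcomm := LinearMap.congr_fun (rTensor_comp_barB (N := N) (actionMap K n M) i)
    ((TensorProduct.mk K (PS K n) M 1).rTensor _ x)
  rw [LinearMap.comp_apply, LinearMap.comp_apply, hact] at hcomm
  exact hcomm.trans hx

theorem barCycles_succ_inf_tensorGrade_le_range {GM : ℤ → Submodule K M}
    {GN : ℤ → Submodule K N} {G : ℤ → Submodule K L} [SetLike.GradedSMul (polyGrade K n) GN]
    {ι : L →ₗ[PS K n] PS K n ⊗[K] M} {ρ : PS K n ⊗[K] M →ₗ[K] L}
    (hι_inj : Function.Injective ι) (hι : actionMap K n M ∘ₗ ι = 0)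
    (hρ : ∀ a, ι (ρ a) = a - 1 ⊗ₜ[K] actionMap K n M a)
    (hρ_grade : ∀ p, (tensorGrade K (polyGrade K n) GM p).map ρ ≤ G p) {i : ℕ} {j : ℤ}
    (hL : barCycles K n N L i ⊓ tensorGrade K G (barDGrade K n N GN i) j ≤
      LinearMap.range (barB K n N L i)) :
    barCycles K n N M (i + 1) ⊓ tensorGrade K GM (barDGrade K n N GN (i + 1)) j ≤
      LinearMap.range (barB K n N M (i + 1)) := by
  rintro x ⟨hx, hxj⟩
  have hz := rTensor_retraction_of_cycle hρ hx
  refine mem_range_barB_of_connecting hι hz (hL ⟨?_, ?_⟩)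
  · refine (rTensor_mem_barCycles_iff hι_inj).1 ?_
    rw [hz]
    exact range_barB_le_barCycles i ⟨_, rfl⟩
  · have hη : (TensorProduct.mk K (PS K n) M 1).rTensor (barD K n N (i + 1)) x ∈
        tensorGrade K (tensorGrade K (polyGrade K n) GM) (barDGrade K n N GN (i + 1)) j :=
      map_tensorGrade_le _ _ map_mk_one_le (fun p => (Submodule.map_id _).le) j ⟨x, hxj, rfl⟩
    exact map_tensorGrade_le _ _ hρ_grade (fun p => (Submodule.map_id _).le) j
      ⟨_, map_barB_tensorGrade_le i j ⟨_, hη, rfl⟩, rfl⟩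

end Connecting

section Graded

variable {GM : ℤ → Submodule K M} {GN : ℤ → Submodule K N}

variable (GM) in
/-- The grading of the kernel of `S ⊗ M → M` as a submodule of `S ⊗ M`. -/
def syzygyGrade (p : ℤ) : Submodule K (inducedSyzygy K n M) :=
  (tensorGrade K (polyGrade K n) GM p).comap ((inducedSyzygy K n M).subtype.restrictScalars K)

instance : SetLike.GradedSMul (polyGrade K n) (syzygyGrade (n := n) GM) where
  smul_mem _ _ _ _ hs ha := gradedSMul_tensorGrade.smul_mem hs ha

theorem map_syzygyRetraction_le [SetLike.GradedSMul (polyGrade K n) GM] (p : ℤ) :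
    (tensorGrade K (polyGrade K n) GM p).map (syzygyRetraction K n M) ≤ syzygyGrade GM p := by
  have hact : tensorGrade K (polyGrade K n) GM p ≤
      (GM p).comap ((actionMap K n M).restrictScalars K) :=
    tensorGrade_le fun q r hqr s hs m hm => by
      have hsm : s • m ∈ GM (q + r) := SetLike.GradedSMul.smul_mem hs hm
      simpa [actionMap_tmul, ← hqr] using hsm
  exact Submodule.map_le_iff_le_comap.2 fun a ha =>
    sub_mem ha (map_mk_one_le p ⟨_, hact ha, rfl⟩)

theorem mk_one_actionMap_of_mem_polyGrade_zero {s : PS K n} (hs : s ∈ polyGrade K n 0) (m : M) :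
    (1 : PS K n) ⊗ₜ[K] (s • m) = s ⊗ₜ[K] m := by
  rw [polyGrade, if_pos le_rfl] at hs
  have hC : s = algebraMap K (PS K n) (coeff 0 s) := totalDegree_eq_zero_iff_eq_C.1 <|
    Nat.le_zero.1 (IsHomogeneous.totalDegree_le hs)
  rw [hC, algebraMap_smul, ← smul_tmul, Algebra.algebraMap_eq_smul_one]

theorem syzygyGrade_eq_bot {d : ℤ} (hd : ∀ p < d, GM p = ⊥) {p : ℤ} (hp : p < d + 1) :
    syzygyGrade (n := n) GM p = ⊥ := by
  have hret : tensorGrade K (polyGrade K n) GM p ≤ LinearMap.ker (syzygyRetraction K n M) := by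
    refine tensorGrade_le fun q r hqr s hs m hm => Subtype.ext ?_
    rw [coe_syzygyRetraction, actionMap_tmul, ZeroMemClass.coe_zero, sub_eq_zero]
    rcases lt_trichotomy q 0 with hq | rfl | hq
    · rw [polyGrade_eq_bot hq, Submodule.mem_bot] at hs
      simp [hs]
    · exact (mk_one_actionMap_of_mem_polyGrade_zero hs m).symm
    · rw [hd r (by omega), Submodule.mem_bot] at hm
      simp [hm]
  refine eq_bot_iff.2 fun a ha => Subtype.ext ?_
  have h : (a : PS K n ⊗[K] M) - 1 ⊗ₜ[K] actionMap K n M a = 0 :=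
    congrArg Subtype.val (LinearMap.mem_ker.1 (hret ha))
  rwa [show actionMap K n M a = 0 from a.2, tmul_zero, sub_zero] at h

theorem barCycles_inf_tensorGrade_le_range [SetLike.GradedSMul (polyGrade K n) GN]
    (hGN : ∀ p < 0, GN p = ⊥) (j : ℤ) (i : ℕ) :
    ∀ {M : Type} [AddCommGroup M] [Module K M] [Module (PS K n) M] [IsScalarTower K (PS K n) M]
      {GM : ℤ → Submodule K M} [SetLike.GradedSMul (polyGrade K n) GM] {d : ℤ},
      (∀ p < d, GM p = ⊥) → j < d + i →
      barCycles K n N M i ⊓ tensorGrade K GM (barDGrade K n N GN i) j ≤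
        LinearMap.range (barB K n N M i) := by
  induction i with
  | zero =>
    intro M _ _ _ _ GM _ d hd hj
    have hbot : tensorGrade K GM (barDGrade K n N GN 0) j = ⊥ :=
      tensorGrade_eq_bot hd hGN (by simpa using hj)
    rw [hbot, inf_bot_eq]
    exact bot_le
  | succ i ih =>
    intro M _ _ _ _ GM _ d hd hj x hx
    exact barCycles_succ_inf_tensorGrade_le_range (L := inducedSyzygy K n M)
      (ι := (inducedSyzygy K n M).subtype) (ρ := syzygyRetraction K n M)
      (Submodule.subtype_injective _) (LinearMap.comp_ker_subtype (actionMap K n M))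
      (fun a => coe_syzygyRetraction a) map_syzygyRetraction_le
      (ih (GM := syzygyGrade GM) (d := d + 1) (fun p hp => syzygyGrade_eq_bot hd hp)
        (by push_cast at hj; omega)) hx

end Graded

end

/-! ### Homogeneous ideals and their quotients -/

noncomputable section

variable {K : Type} [Field K] {n : ℕ}

theorem polyGrade_natCast (d : ℕ) : polyGrade K n d = homogeneousSubmodule (Fin n) K d := by
  rw [polyGrade, if_pos (Int.natCast_nonneg d), Int.toNat_natCast]

variable (K n) in
/-- The projection of `S` onto its component of degree `p`, which is zero for `p < 0`. -/
def polyProj (p : ℤ) : PS K n →ₗ[K] PS K n :=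
  if 0 ≤ p then homogeneousComponent p.toNat else 0

theorem polyProj_mem (p : ℤ) (x : PS K n) : polyProj K n p x ∈ polyGrade K n p := by
  unfold polyProj polyGrade
  split_ifs
  · exact homogeneousComponent_isHomogeneous _ _
  · exact zero_mem _

theorem polyProj_of_mem {p : ℤ} {x : PS K n} (hx : x ∈ polyGrade K n p) :
    polyProj K n p x = x := by
  unfold polyProj
  unfold polyGrade at hx
  split_ifs at hx ⊢
  · rw [homogeneousComponent_of_mem hx, if_pos rfl]
  · rw [(Submodule.mem_bot K).1 hx, map_zero]

theorem polyProj_of_mem_ne {p q : ℤ} (hq : q ≠ p) {x : PS K n} (hx : x ∈ polyGrade K n q) :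
    polyProj K n p x = 0 := by
  unfold polyProj
  unfold polyGrade at hx
  split_ifs at hx ⊢
  · rw [homogeneousComponent_of_mem hx, if_neg (by omega)]
  · rw [(Submodule.mem_bot K).1 hx, map_zero]
  · rfl
  · rfl

theorem exists_eq_sum_polyProj (x : PS K n) : ∃ s : Finset ℤ, x = ∑ p ∈ s, polyProj K n p x := by
  refine ⟨(Finset.range (x.totalDegree + 1)).map Nat.castEmbedding, ?_⟩
  rw [Finset.sum_map]
  conv_lhs => rw [← sum_homogeneousComponent x]
  exact Finset.sum_congr rfl fun i _ => by simp [polyProj]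

theorem iSup_polyGrade : iSup (polyGrade K n) = ⊤ := by
  refine eq_top_iff.2 fun x _ => ?_
  obtain ⟨s, hs⟩ := exists_eq_sum_polyProj x
  rw [hs]
  exact sum_mem fun p _ => Submodule.mem_iSup_of_mem p (polyProj_mem p x)

theorem isFiniteGrading_polyGrade : IsFiniteGrading (polyGrade K n) where
  isInternal := isInternal_of_projections _ (polyProj K n) (fun _ _ => polyProj_of_mem)
    (fun _ _ hq _ => polyProj_of_mem_ne hq) iSup_polyGrade
  eq_bot_of_neg _ := polyGrade_eq_bot
  finiteDimensional p := by
    rcases lt_or_ge p 0 with hp | hp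
    · rw [polyGrade_eq_bot hp]
      infer_instance
    · rw [polyGrade, if_pos hp]
      exact Module.Finite.iff_fg.2 (homogeneousSubmodule_fg _ _ p.toNat)

section BarGrade

variable {N N' : Type} [AddCommGroup N] [Module K N] [AddCommGroup N'] [Module K N']
  {GN : ℤ → Submodule K N} {GN' : ℤ → Submodule K N'}

theorem IsFiniteGrading.barDGrade (h : IsFiniteGrading GN) :
    ∀ i, IsFiniteGrading (barDGrade K n N GN i)
  | 0 => h
  | i + 1 => isFiniteGrading_polyGrade.tensor (h.barDGrade i)

theorem finrank_barDGrade_eq (h : IsFiniteGrading GN) (h' : IsFiniteGrading GN')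
    (hfin : ∀ p, Module.finrank K (GN p) = Module.finrank K (GN' p)) (i : ℕ) (p : ℤ) :
    Module.finrank K (barDGrade K n N GN i p) = Module.finrank K (barDGrade K n N' GN' i p) := by
  induction i generalizing p with
  | zero => exact hfin p
  | succ i ih =>
    exact isFiniteGrading_polyGrade.finrank_tensorGrade_eq (h.barDGrade i)
      isFiniteGrading_polyGrade (h'.barDGrade i) (fun _ => rfl) ih p

end BarGrade

theorem IsHomog.polyProj_apply_mem {I : Ideal (PS K n)} (hI : IsHomog K n I) (p : ℤ) {x : PS K n}
    (hx : x ∈ I) : polyProj K n p x ∈ I := by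
  unfold polyProj
  split_ifs
  · exact hI x hx _
  · exact zero_mem _

variable (K n) in
/-- The inclusion of an ideal, as a `K`-linear map. -/
def idealIncl (I : Ideal (PS K n)) : ↥I →ₗ[K] PS K n := I.subtype.restrictScalars K

variable (K n) in
/-- The projection to the quotient by an ideal, as a `K`-linear map. -/
def idealMkQ (J : Ideal (PS K n)) : PS K n →ₗ[K] PS K n ⧸ J :=
  (Ideal.Quotient.mkₐ K J).toLinearMap

theorem idealIncl_injective (I : Ideal (PS K n)) : Function.Injective (idealIncl K n I) :=
  Subtype.val_injective

theorem idealMkQ_surjective (J : Ideal (PS K n)) : Function.Surjective (idealMkQ K n J) :=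
  Ideal.Quotient.mk_surjective

theorem idealMkQ_eq_zero_iff {J : Ideal (PS K n)} {x : PS K n} : idealMkQ K n J x = 0 ↔ x ∈ J :=
  Ideal.Quotient.eq_zero_iff_mem

theorem exact_idealIncl_idealMkQ (J : Ideal (PS K n)) :
    Function.Exact (idealIncl K n J) (idealMkQ K n J) := fun _ =>
  idealMkQ_eq_zero_iff.trans ⟨fun h => ⟨⟨_, h⟩, rfl⟩, by rintro ⟨y, rfl⟩; exact y.2⟩

theorem map_idealIncl_idealGrade (I : Ideal (PS K n)) (p : ℤ) :
    (idealGrade K n I p).map (idealIncl K n I) = I.restrictScalars K ⊓ polyGrade K n p := by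
  refine Submodule.ext fun x => ⟨?_, fun ⟨hxI, hx⟩ => ⟨⟨x, hxI⟩, hx, rfl⟩⟩
  rintro ⟨y, hy, rfl⟩
  exact ⟨y.2, hy⟩

theorem finrank_idealGrade (I : Ideal (PS K n)) (p : ℤ) :
    Module.finrank K (idealGrade K n I p) =
      Module.finrank K (I.restrictScalars K ⊓ polyGrade K n p : Submodule K (PS K n)) := by
  rw [← map_idealIncl_idealGrade, finrank_map_of_injective _ (idealIncl_injective I)]

theorem finrank_quotGrade_add_finrank_idealGrade (J : Ideal (PS K n)) (p : ℤ) :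
    Module.finrank K (quotGrade K n J p) + Module.finrank K (idealGrade K n J p) =
      Module.finrank K (polyGrade K n p) := by
  have := (isFiniteGrading_polyGrade (K := K) (n := n)).finiteDimensional p
  have hker : LinearMap.ker (idealMkQ K n J) = J.restrictScalars K :=
    Submodule.ext fun _ => idealMkQ_eq_zero_iff
  rw [finrank_idealGrade, ← hker]
  exact finrank_map_add_finrank_ker_inf (idealMkQ K n J) (polyGrade K n p)

theorem IsHomog.isFiniteGrading_idealGrade {I : Ideal (PS K n)} (hI : IsHomog K n I) :
    IsFiniteGrading (idealGrade K n I) where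
  isInternal := by
    let π (p : ℤ) : ↥I →ₗ[K] ↥I := LinearMap.codRestrict (I.restrictScalars K)
      (polyProj K n p ∘ₗ idealIncl K n I) fun x => hI.polyProj_apply_mem p x.2
    refine isInternal_of_projections _ π (fun p x hx => Subtype.ext (polyProj_of_mem hx))
      (fun p q hq x hx => Subtype.ext (polyProj_of_mem_ne hq hx)) (eq_top_iff.2 fun x _ => ?_)
    obtain ⟨s, hs⟩ := exists_eq_sum_polyProj (x : PS K n)
    have hx : x = ∑ p ∈ s, π p x := idealIncl_injective I (by rw [map_sum]; exact hs)
    rw [hx]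
    exact sum_mem fun p _ => Submodule.mem_iSup_of_mem p (polyProj_mem p (x : PS K n))
  eq_bot_of_neg p hp := by
    refine eq_bot_iff.2 fun x (hx : (x : PS K n) ∈ polyGrade K n p) => ?_
    rw [polyGrade_eq_bot hp, Submodule.mem_bot] at hx
    exact Subtype.ext hx
  finiteDimensional p := by
    have := (isFiniteGrading_polyGrade (K := K) (n := n)).finiteDimensional p
    have : FiniteDimensional K ((idealGrade K n I p).map (idealIncl K n I)) :=
      Submodule.finiteDimensional_of_le ((map_idealIncl_idealGrade I p).trans_le inf_le_right)
    exact (Submodule.equivMapOfInjective _ (idealIncl_injective I) _).symm.finiteDimensional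

theorem IsHomog.isFiniteGrading_quotGrade {J : Ideal (PS K n)} (hJ : IsHomog K n J) :
    IsFiniteGrading (quotGrade K n J) where
  isInternal := by
    let π (p : ℤ) : (PS K n ⧸ J) →ₗ[K] PS K n ⧸ J := Submodule.mapQ (J.restrictScalars K)
      (J.restrictScalars K) (polyProj K n p) fun x hx => hJ.polyProj_apply_mem p hx
    have hπ (p : ℤ) (x : PS K n) :
        π p (idealMkQ K n J x) = idealMkQ K n J (polyProj K n p x) := rfl
    refine isInternal_of_projections _ π ?_ ?_ ?_
    · rintro p _ ⟨x, hx, rfl⟩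
      exact (hπ p x).trans (congrArg _ (polyProj_of_mem hx))
    · rintro p q hq _ ⟨x, hx, rfl⟩
      exact (hπ p x).trans ((congrArg _ (polyProj_of_mem_ne hq hx)).trans (map_zero _))
    · change ⨆ p, (polyGrade K n p).map (idealMkQ K n J) = ⊤
      rw [← Submodule.map_iSup, iSup_polyGrade, Submodule.map_top,
        LinearMap.range_eq_top.2 (idealMkQ_surjective J)]
  eq_bot_of_neg p hp := by rw [quotGrade, polyGrade_eq_bot hp, Submodule.map_bot]
  finiteDimensional p := by
    have := (isFiniteGrading_polyGrade (K := K) (n := n)).finiteDimensional p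
    unfold quotGrade
    infer_instance

instance (I : Ideal (PS K n)) : SetLike.GradedSMul (polyGrade K n) (idealGrade K n I) where
  smul_mem _ _ _ _ := mul_mem_polyGrade

instance (J : Ideal (PS K n)) : SetLike.GradedSMul (polyGrade K n) (quotGrade K n J) where
  smul_mem := by
    rintro p q s _ hs ⟨x, hx, rfl⟩
    exact ⟨s * x, mul_mem_polyGrade hs hx, rfl⟩

end

/-! ### Polynomial families -/

noncomputable section

variable {K σ V W U V' : Type} [Field K] [AddCommGroup V] [Module K V] [AddCommGroup W]
  [Module K W] [AddCommGroup U] [Module K U] [AddCommGroup V'] [Module K V']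

variable (K σ V) in
/-- The families of vectors of `V` depending polynomially on parameters `t : σ → K`. -/
def polyFamilies : Submodule K ((σ → K) → V) :=
  Submodule.span K (Set.range fun q : MvPolynomial σ K × V => fun t => eval t q.1 • q.2)

theorem eval_smul_mem_polyFamilies (p : MvPolynomial σ K) (v : V) :
    (fun t => eval t p • v) ∈ polyFamilies K σ V :=
  Submodule.subset_span ⟨(p, v), rfl⟩

theorem const_mem_polyFamilies (v : V) : (fun _ => v) ∈ polyFamilies K σ V := by
  simpa only [map_one, one_smul] using eval_smul_mem_polyFamilies (1 : MvPolynomial σ K) v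

theorem map_mem_polyFamilies (L : V →ₗ[K] W) {f : (σ → K) → V} (hf : f ∈ polyFamilies K σ V) :
    (fun t => L (f t)) ∈ polyFamilies K σ W := by
  refine (Submodule.map_span_le (L.compLeft (σ → K)) _ _).2 ?_ ⟨f, hf, rfl⟩
  rintro _ ⟨⟨p, v⟩, rfl⟩
  convert eval_smul_mem_polyFamilies p (L v)
  exact map_smul L _ v

theorem bilin_mem_polyFamilies (B : V →ₗ[K] W →ₗ[K] U) {f : (σ → K) → V} {g : (σ → K) → W}
    (hf : f ∈ polyFamilies K σ V) (hg : g ∈ polyFamilies K σ W) :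
    (fun t => B (f t) (g t)) ∈ polyFamilies K σ U := by
  let pointwise : ((σ → K) → V) →ₗ[K] ((σ → K) → W) →ₗ[K] ((σ → K) → U) :=
    LinearMap.mk₂ K (fun f g t => B (f t) (g t)) (fun _ _ _ => by ext; simp)
      (fun _ _ _ => by ext; simp) (fun _ _ _ => by ext; simp) (fun _ _ _ => by ext; simp)
  have hle : Submodule.map₂ pointwise (polyFamilies K σ V) (polyFamilies K σ W) ≤
      polyFamilies K σ U := by
    rw [polyFamilies, polyFamilies, Submodule.map₂_span_span, Submodule.span_le]
    rintro _ ⟨_, ⟨⟨p, v⟩, rfl⟩, _, ⟨⟨q, w⟩, rfl⟩, rfl⟩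
    convert eval_smul_mem_polyFamilies (q * p) (B v w) using 1
    simp [pointwise, mul_smul]
  exact hle (Submodule.apply_mem_map₂ pointwise hf hg)

theorem tensorMap_mem_polyFamilies {f : (σ → K) → V →ₗ[K] V'} {g : (σ → K) → W →ₗ[K] U}
    (hf : ∀ v, (fun t => f t v) ∈ polyFamilies K σ V')
    (hg : ∀ w, (fun t => g t w) ∈ polyFamilies K σ U) (x : V ⊗[K] W) :
    (fun t => TensorProduct.map (f t) (g t) x) ∈ polyFamilies K σ (V' ⊗[K] U) := by
  induction x using TensorProduct.induction_on with
  | zero =>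
    simp only [map_zero]
    exact zero_mem _
  | tmul v w =>
    simp only [TensorProduct.map_tmul]
    exact bilin_mem_polyFamilies (TensorProduct.mk K V' U) (hf v) (hg w)
  | add x y hx hy =>
    simp only [map_add]
    exact add_mem hx hy

theorem barMap_mem_polyFamilies {n : ℕ} {f : (σ → K) → V →ₗ[K] W}
    (hf : ∀ v, (fun t => f t v) ∈ polyFamilies K σ W) (i : ℕ) (x : barD K n V i) :
    (fun t => barMap (n := n) LinearMap.id (f t) i x) ∈ polyFamilies K σ (barD K n W i) := by
  induction i with
  | zero => exact hf x
  | succ i ih =>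
    exact tensorMap_mem_polyFamilies (f := fun _ => LinearMap.id)
      (fun s => const_mem_polyFamilies s) ih x

theorem exists_eval_eq_of_mem_polyFamilies {f : (σ → K) → K} (hf : f ∈ polyFamilies K σ K) :
    ∃ p : MvPolynomial σ K, ∀ t, f t = eval t p := by
  induction hf using Submodule.span_induction with
  | mem f hf =>
    obtain ⟨⟨p, c⟩, rfl⟩ := hf
    exact ⟨p * C c, fun t => by simp⟩
  | zero => exact ⟨0, fun t => by simp⟩
  | add f g _ _ hf hg =>
    obtain ⟨p, hp⟩ := hf
    obtain ⟨q, hq⟩ := hg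
    exact ⟨p + q, fun t => by simp [hp, hq]⟩
  | smul c f _ hf =>
    obtain ⟨p, hp⟩ := hf
    exact ⟨C c * p, fun t => by simp [hp]⟩

theorem aeval_mem_polyFamilies {n : ℕ} {v : Fin n → (σ → K) → PS K n}
    (hv : ∀ i, v i ∈ polyFamilies K σ (PS K n)) (q : PS K n) :
    (fun t => aeval (fun i => v i t) q) ∈ polyFamilies K σ (PS K n) := by
  induction q using MvPolynomial.induction_on with
  | C a => simpa only [algHom_C] using const_mem_polyFamilies _
  | add p q hp hq =>
    simp only [map_add]
    exact add_mem hp hq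
  | mul_X p i hp =>
    simp only [map_mul, aeval_X]
    exact bilin_mem_polyFamilies (LinearMap.mul K (PS K n)) hp (hv i)

/-- The filter of Zariski neighbourhoods of `t₀` in affine space, generated by the sets
`{F ≠ 0}` with `F(t₀) ≠ 0`. -/
def zariskiNhds (t₀ : σ → K) : Filter (σ → K) where
  sets := {s | ∃ F : MvPolynomial σ K, eval t₀ F ≠ 0 ∧ ∀ t, eval t F ≠ 0 → t ∈ s}
  univ_sets := ⟨1, by simp, fun _ _ => Set.mem_univ _⟩
  sets_of_superset := fun ⟨F, hF, hs⟩ hst => ⟨F, hF, fun t ht => hst (hs t ht)⟩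
  inter_sets := fun ⟨F, hF, hs⟩ ⟨G, hG, hs'⟩ => ⟨F * G, by simp [hF, hG], fun t ht => by
    rw [map_mul, mul_ne_zero_iff] at ht
    exact ⟨hs t ht.1, hs' t ht.2⟩⟩

theorem eventually_zariskiNhds_iff {t₀ : σ → K} {P : (σ → K) → Prop} :
    (∀ᶠ t in zariskiNhds t₀, P t) ↔
      ∃ F : MvPolynomial σ K, eval t₀ F ≠ 0 ∧ ∀ t, eval t F ≠ 0 → P t :=
  Iff.rfl

theorem exists_units_of_eventually_zariskiNhds [Infinite K] {P : (Unit → K) → Prop}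
    (h : ∀ᶠ t in zariskiNhds 0, P t) : ∃ u : Kˣ, P fun _ => u := by
  obtain ⟨F, hF0, hF⟩ := eventually_zariskiNhds_iff.1 h
  have hF' : F * X () ≠ 0 := mul_ne_zero (by rintro rfl; simp at hF0) (X_ne_zero ())
  obtain ⟨t, ht⟩ : ∃ t, eval t (F * X ()) ≠ 0 := by
    contrapose! hF'
    exact MvPolynomial.funext fun t => by rw [hF' t, map_zero]
  rw [map_mul, eval_X, mul_ne_zero_iff] at ht
  exact ⟨Units.mk0 (t ()) ht.2, hF t ht.1⟩

theorem eventually_linearIndependent {ι : Type} [Finite ι] {u : ι → (σ → K) → V}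
    (hu : ∀ k, u k ∈ polyFamilies K σ V) {t₀ : σ → K}
    (h₀ : LinearIndependent K fun k => u k t₀) :
    ∀ᶠ t in zariskiNhds t₀, LinearIndependent K fun k => u k t := by
  classical
  have := Fintype.ofFinite ι
  obtain ⟨ψ, hψ⟩ := LinearMap.exists_leftInverse_of_injective
    (Fintype.linearCombination K fun k => u k t₀)
    (LinearMap.ker_eq_bot.2 (linearIndependent_iff_injective_fintypeLinearCombination.1 h₀))
  have hψ (l : ι) : ψ (u l t₀) = Pi.single l 1 := by
    simpa using LinearMap.congr_fun hψ (Pi.single l 1)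
  choose p hp using fun k l => exists_eval_eq_of_mem_polyFamilies
    (map_mem_polyFamilies (LinearMap.proj k ∘ₗ ψ) (hu l))
  have hdet (t : σ → K) : eval t (Matrix.of p).det = (Matrix.of fun k l => ψ (u l t) k).det := by
    rw [RingHom.map_det]
    exact congrArg Matrix.det (Matrix.ext fun k l => (hp k l t).symm)
  refine eventually_zariskiNhds_iff.2 ⟨(Matrix.of p).det, ?_, fun t ht => ?_⟩
  · have hone : (Matrix.of fun k l => ψ (u l t₀) k) = 1 := by
      ext k l
      rw [Matrix.of_apply, hψ, Pi.single_apply, Matrix.one_apply]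
    rw [hdet, hone, Matrix.det_one]
    exact one_ne_zero
  · rw [hdet] at ht
    exact .of_comp ψ (Matrix.linearIndependent_cols_of_det_ne_zero ht)

theorem eventually_finrank_map_le {L : (σ → K) → V →ₗ[K] W}
    (hL : ∀ v, (fun t => L t v) ∈ polyFamilies K σ W) (C : Submodule K V)
    [FiniteDimensional K C] (t₀ : σ → K) :
    ∀ᶠ t in zariskiNhds t₀,
      Module.finrank K (C.map (L t₀)) ≤ Module.finrank K (C.map (L t)) := by
  let b := Module.finBasis K (C.map (L t₀))
  choose v hvC hv using fun k => (b k).2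
  have h₀ : LinearIndependent K fun k => L t₀ (v k) := by
    simp only [hv]
    exact b.linearIndependent.map' _ (Submodule.ker_subtype _)
  filter_upwards [eventually_linearIndependent (fun k => hL (v k)) h₀] with t ht
  have ht' : LinearIndependent K fun k => (⟨L t (v k), v k, hvC k, rfl⟩ : C.map (L t)) :=
    .of_comp (C.map (L t)).subtype ht
  simpa using ht'.fintype_card_le_finrank

end

/-! ### Semicontinuity of the ranks of the bar differentials -/

noncomputable section

variable {K : Type} [Field K] {n : ℕ}

theorem finrank_sup_ker_inf_add_finrank_map {V W : Type} [AddCommGroup V] [Module K V]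
    [AddCommGroup W] [Module K W] (f : V →ₗ[K] W) {p q : Submodule K V} [FiniteDimensional K q]
    (hpq : p ≤ q) :
    Module.finrank K (p ⊔ LinearMap.ker f ⊓ q : Submodule K V) + Module.finrank K (q.map f) =
      Module.finrank K (p.map f) + Module.finrank K q := by
  have hle : p ⊔ LinearMap.ker f ⊓ q ≤ q := sup_le hpq inf_le_right
  have := Submodule.finiteDimensional_of_le hle
  have hmap : (p ⊔ LinearMap.ker f ⊓ q).map f = p.map f := by
    rw [Submodule.map_sup, sup_eq_left]
    refine Submodule.map_le_iff_le_comap.2 fun x hx => ?_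
    rw [Submodule.mem_comap, LinearMap.mem_ker.1 hx.1]
    exact zero_mem _
  have hker : LinearMap.ker f ⊓ (p ⊔ LinearMap.ker f ⊓ q) = LinearMap.ker f ⊓ q :=
    le_antisymm (inf_le_inf_left _ hle) (le_inf inf_le_left le_sup_right)
  have hsup := finrank_map_add_finrank_ker_inf f (p ⊔ LinearMap.ker f ⊓ q)
  have hq := finrank_map_add_finrank_ker_inf f q
  rw [hmap, hker] at hsup
  omega

variable (K n) in
/-- The rank of the bar differential `I ⊗ S^{⊗ (i + 1)} ⊗ S/J → I ⊗ S^{⊗ i} ⊗ S/J` in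
degree `j`. -/
def barRank (i : ℕ) (j : ℤ) (I J : Ideal (PS K n)) : ℕ :=
  Module.finrank K ((tensorGrade K (idealGrade K n I)
    (barDGrade K n (PS K n ⧸ J) (quotGrade K n J) (i + 1)) j).map (barB K n (PS K n ⧸ J) ↥I i))

section RelationMap

variable {A A' B B' : Type} [AddCommGroup A] [Module K A] [AddCommGroup A'] [Module K A']
  [AddCommGroup B] [Module K B] [AddCommGroup B'] [Module K B']

theorem barMap_id_comp (φ : A →ₗ[K] A') (ψ : A' →ₗ[K] B) (i : ℕ) :
    barMap (n := n) LinearMap.id (ψ ∘ₗ φ) i =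
      barMap (n := n) LinearMap.id ψ i ∘ₗ barMap (n := n) LinearMap.id φ i := by
  induction i with
  | zero => rfl
  | succ i ih =>
    rw [barMap, ih]
    exact TensorProduct.map_comp LinearMap.id _ LinearMap.id _

/-- For inclusions `α : I → S` and `β : J → S`, the quotient of `S ⊗ S^{⊗ i} ⊗ S` by the image
of this map is the cokernel of the composite of the bar differential
`I ⊗ S^{⊗ (i + 1)} ⊗ S/J → I ⊗ S^{⊗ i} ⊗ S/J` with the inclusion into `S ⊗ S^{⊗ i} ⊗ S/J`.
The source does not involve `S/J`, so that `J` can be deformed together with `I`. -/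
def relationMap (α : A →ₗ[K] PS K n) (β : B →ₗ[K] PS K n) (i : ℕ) :
    (A ⊗[K] barD K n (PS K n) (i + 1)) × (PS K n ⊗[K] barD K n B i) →ₗ[K]
      PS K n ⊗[K] barD K n (PS K n) i :=
  (barB K n (PS K n) (PS K n) i ∘ₗ α.rTensor _).coprod ((barMap LinearMap.id β i).lTensor _)

variable (n) in
/-- The degree `j` part of the source of `relationMap`. -/
def relationGrade (GA : ℤ → Submodule K A) (GB : ℤ → Submodule K B) (i : ℕ) (j : ℤ) :
    Submodule K ((A ⊗[K] barD K n (PS K n) (i + 1)) × (PS K n ⊗[K] barD K n B i)) :=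
  (tensorGrade K GA (barDGrade K n (PS K n) (polyGrade K n) (i + 1)) j).prod
    (tensorGrade K (polyGrade K n) (barDGrade K n B GB i) j)

theorem relationMap_comp_comp (α : A' →ₗ[K] PS K n) (β : B' →ₗ[K] PS K n) (f : A →ₗ[K] A')
    (g : B →ₗ[K] B') (i : ℕ) :
    relationMap (α ∘ₗ f) (β ∘ₗ g) i =
      relationMap α β i ∘ₗ (f.rTensor _).prodMap ((barMap LinearMap.id g i).lTensor _) := by
  rw [relationMap, LinearMap.rTensor_comp, barMap_id_comp, LinearMap.lTensor_comp]
  exact LinearMap.prod_ext (by ext; simp [relationMap]) (by ext; simp [relationMap])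

theorem map_prodMap_relationGrade_le {GA : ℤ → Submodule K A} {GA' : ℤ → Submodule K A'}
    {GB : ℤ → Submodule K B} {GB' : ℤ → Submodule K B'} {f : A →ₗ[K] A'} {g : B →ₗ[K] B'}
    (hf : ∀ p, (GA p).map f ≤ GA' p) (hg : ∀ p, (GB p).map g ≤ GB' p) (i : ℕ) (j : ℤ) :
    (relationGrade n GA GB i j).map
      ((f.rTensor _).prodMap ((barMap LinearMap.id g i).lTensor _)) ≤
        relationGrade n GA' GB' i j := by
  rw [relationGrade, LinearMap.prodMap_map_prod]
  exact Submodule.prod_mono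
    (map_tensorGrade_le f LinearMap.id hf (fun p => (Submodule.map_id _).le) j)
    (map_tensorGrade_le LinearMap.id _ (fun p => (Submodule.map_id _).le)
      (map_barMap_barDGrade_le LinearMap.id g (fun p => (Submodule.map_id _).le) hg i) j)

theorem finiteDimensional_relationGrade {GA : ℤ → Submodule K A} {GB : ℤ → Submodule K B}
    (hA : IsFiniteGrading GA) (hB : IsFiniteGrading GB) (i : ℕ) (j : ℤ) :
    FiniteDimensional K (relationGrade n GA GB i j) := by
  have hpoly := isFiniteGrading_polyGrade (K := K) (n := n)
  have h₁ := (hA.tensor (hpoly.barDGrade (n := n) (i + 1))).finiteDimensional j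
  have h₂ := (hpoly.tensor (hB.barDGrade (n := n) i)).finiteDimensional j
  exact Module.Finite.iff_fg.2 ((Module.Finite.iff_fg.1 h₁).prod (Module.Finite.iff_fg.1 h₂))

theorem relationMap_mem_polyFamilies {σ : Type} {α : (σ → K) → A →ₗ[K] PS K n}
    {β : (σ → K) → B →ₗ[K] PS K n} (hα : ∀ a, (fun t => α t a) ∈ polyFamilies K σ (PS K n))
    (hβ : ∀ b, (fun t => β t b) ∈ polyFamilies K σ (PS K n)) (i : ℕ)
    (x : (A ⊗[K] barD K n (PS K n) (i + 1)) × (PS K n ⊗[K] barD K n B i)) :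
    (fun t => relationMap (α t) (β t) i x) ∈
      polyFamilies K σ (PS K n ⊗[K] barD K n (PS K n) i) :=
  add_mem
    (map_mem_polyFamilies (barB K n (PS K n) (PS K n) i)
      (tensorMap_mem_polyFamilies (g := fun _ => LinearMap.id) hα const_mem_polyFamilies x.1))
    (tensorMap_mem_polyFamilies (f := fun _ => LinearMap.id) const_mem_polyFamilies
      (barMap_mem_polyFamilies hβ i) x.2)

end RelationMap

variable (K n) in
/-- The degree `j` part of the image of `relationMap` for a pair of ideals. -/
def relationSpace (i : ℕ) (j : ℤ) (I J : Ideal (PS K n)) :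
    Submodule K (PS K n ⊗[K] barD K n (PS K n) i) :=
  (relationGrade n (idealGrade K n I) (idealGrade K n J) i j).map
    (relationMap (idealIncl K n I) (idealIncl K n J) i)

variable (K n) in
/-- The projection `S ⊗ S^{⊗ i} ⊗ S → S ⊗ S^{⊗ i} ⊗ S/J`. -/
def barMkQ (J : Ideal (PS K n)) (i : ℕ) :
    PS K n ⊗[K] barD K n (PS K n) i →ₗ[K] PS K n ⊗[K] barD K n (PS K n ⧸ J) i :=
  (barMap LinearMap.id (idealMkQ K n J) i).lTensor _

theorem barMkQ_comp_barB_comp_rTensor (I J : Ideal (PS K n)) (i : ℕ) :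
    barMkQ K n J i ∘ₗ barB K n (PS K n) (PS K n) i ∘ₗ (idealIncl K n I).rTensor _ =
      (idealIncl K n I).rTensor _ ∘ₗ barB K n (PS K n ⧸ J) ↥I i ∘ₗ
        (barMap LinearMap.id (idealMkQ K n J) (i + 1)).lTensor _ := by
  have h₁ := map_comp_barB (AlgHom.id K (PS K n)) LinearMap.id (idealMkQ K n J)
    (fun _ (_ : PS K n) => rfl) (fun _ _ => rfl) i
  have h₂ := rTensor_comp_barB (N := PS K n ⧸ J) I.subtype i
  refine LinearMap.ext fun x => ?_
  refine (LinearMap.congr_fun h₁ _).trans (Eq.trans ?_ (LinearMap.congr_fun h₂ _).symm)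
  refine congrArg (barB K n (PS K n ⧸ J) (PS K n) i) ?_
  exact LinearMap.congr_fun
    ((LinearMap.lTensor_comp_rTensor ..).trans (LinearMap.rTensor_comp_lTensor ..).symm) x

theorem map_barMkQ_tensorGrade (J : Ideal (PS K n)) (i : ℕ) (j : ℤ) :
    (tensorGrade K (polyGrade K n) (barDGrade K n (PS K n) (polyGrade K n) i) j).map
        (barMkQ K n J i) =
      tensorGrade K (polyGrade K n) (barDGrade K n (PS K n ⧸ J) (quotGrade K n J) i) j :=
  map_tensorGrade_eq LinearMap.id _ (fun _ => Submodule.map_id _)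
    (map_barMap_barDGrade_eq LinearMap.id (idealMkQ K n J) (fun _ => Submodule.map_id _)
      (fun _ => rfl) i) j

theorem map_barB_comp_rTensor_idealIncl_le (I : Ideal (PS K n)) (i : ℕ) (j : ℤ) :
    (tensorGrade K (idealGrade K n I)
        (barDGrade K n (PS K n) (polyGrade K n) (i + 1)) j).map
        (barB K n (PS K n) (PS K n) i ∘ₗ (idealIncl K n I).rTensor _) ≤
      tensorGrade K (polyGrade K n) (barDGrade K n (PS K n) (polyGrade K n) i) j := by
  rw [Submodule.map_comp]
  refine (Submodule.map_mono ?_).trans (map_barB_tensorGrade_le i j)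
  exact map_tensorGrade_le _ _ (fun p => (map_idealIncl_idealGrade I p).trans_le inf_le_right)
    (fun p => (Submodule.map_id _).le) j

theorem map_lTensor_barMap_idealIncl_le (J : Ideal (PS K n)) (i : ℕ) (j : ℤ) :
    (tensorGrade K (polyGrade K n) (barDGrade K n ↥J (idealGrade K n J) i) j).map
        ((barMap LinearMap.id (idealIncl K n J) i).lTensor _) ≤
      tensorGrade K (polyGrade K n) (barDGrade K n (PS K n) (polyGrade K n) i) j :=
  map_tensorGrade_le LinearMap.id _ (fun _ => (Submodule.map_id _).le)
    (map_barMap_barDGrade_le LinearMap.id _ (fun _ => (Submodule.map_id _).le)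
      (fun p => (map_idealIncl_idealGrade J p).trans_le inf_le_right) i) j

theorem finiteDimensional_tensorGrade_polyGrade (i : ℕ) (j : ℤ) : FiniteDimensional K
    (tensorGrade K (polyGrade K n) (barDGrade K n (PS K n) (polyGrade K n) i) j) :=
  have hpoly := isFiniteGrading_polyGrade (K := K) (n := n)
  (hpoly.tensor (hpoly.barDGrade (n := n) i)).finiteDimensional j

theorem finiteDimensional_relationSpace (I J : Ideal (PS K n)) (i : ℕ) (j : ℤ) :
    FiniteDimensional K (relationSpace K n i j I J) := by
  have := finiteDimensional_tensorGrade_polyGrade (K := K) (n := n) i j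
  refine Submodule.finiteDimensional_of_le (LinearMap.map_coprod_prod .. |>.trans_le <|
    sup_le (map_barB_comp_rTensor_idealIncl_le I i j) (map_lTensor_barMap_idealIncl_le J i j))

theorem ker_barMkQ_inf_tensorGrade {J : Ideal (PS K n)} (hJ : IsHomog K n J) (i : ℕ) (j : ℤ) :
    LinearMap.ker (barMkQ K n J i) ⊓
        tensorGrade K (polyGrade K n) (barDGrade K n (PS K n) (polyGrade K n) i) j =
      (tensorGrade K (polyGrade K n) (barDGrade K n ↥J (idealGrade K n J) i) j).map
        ((barMap LinearMap.id (idealIncl K n J) i).lTensor _) := by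
  have hpoly := isFiniteGrading_polyGrade (K := K) (n := n)
  have hexact : Function.Exact ((barMap LinearMap.id (idealIncl K n J) i).lTensor (PS K n))
      (barMkQ K n J i) :=
    lTensor_exact (PS K n)
      (barMap_id_exact _ _ (idealMkQ_surjective J) (exact_idealIncl_idealMkQ J) i)
      (barMap_surjective _ _ Function.surjective_id (idealMkQ_surjective J) i)
  apply le_antisymm
  · rintro x ⟨hx, hxj⟩
    obtain ⟨y, rfl⟩ := (hexact x).1 hx
    exact (hpoly.tensor (hJ.isFiniteGrading_idealGrade.barDGrade i)).exists_mem_of_apply_mem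
      (hpoly.tensor (hpoly.barDGrade i)) _ (map_lTensor_barMap_idealIncl_le J i) hxj
  · rintro _ ⟨y, hy, rfl⟩
    exact ⟨(hexact _).2 ⟨y, rfl⟩, map_lTensor_barMap_idealIncl_le J i j ⟨y, hy, rfl⟩⟩

theorem map_barMap_idealMkQ_tensorGrade (I J : Ideal (PS K n)) (i : ℕ) (j : ℤ) :
    (tensorGrade K (idealGrade K n I) (barDGrade K n (PS K n) (polyGrade K n) i) j).map
        ((barMap LinearMap.id (idealMkQ K n J) i).lTensor _) =
      tensorGrade K (idealGrade K n I) (barDGrade K n (PS K n ⧸ J) (quotGrade K n J) i) j :=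
  map_tensorGrade_eq LinearMap.id _ (fun _ => Submodule.map_id _)
    (map_barMap_barDGrade_eq LinearMap.id (idealMkQ K n J) (fun _ => Submodule.map_id _)
      (fun _ => rfl) i) j

theorem barRank_eq_finrank_map (I J : Ideal (PS K n)) (i : ℕ) (j : ℤ) :
    barRank K n i j I J = Module.finrank K (((tensorGrade K (idealGrade K n I)
        (barDGrade K n (PS K n) (polyGrade K n) (i + 1)) j).map
      (barB K n (PS K n) (PS K n) i ∘ₗ (idealIncl K n I).rTensor _)).map (barMkQ K n J i)) := by
  have hinj : Function.Injective
      ((idealIncl K n I).rTensor (barD K n (PS K n ⧸ J) i)) :=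
    Module.Flat.rTensor_preserves_injective_linearMap _ (idealIncl_injective I)
  rw [barRank, ← map_barMap_idealMkQ_tensorGrade, ← Submodule.map_comp, ← Submodule.map_comp,
    barMkQ_comp_barB_comp_rTensor, Submodule.map_comp _ (LinearMap.rTensor _ _)]
  exact (finrank_map_of_injective (A := ↥I ⊗[K] barD K n (PS K n ⧸ J) i) _ hinj _).symm

theorem finrank_relationSpace_add (I : Ideal (PS K n)) {J : Ideal (PS K n)} (hJ : IsHomog K n J)
    (i : ℕ) (j : ℤ) :
    Module.finrank K (relationSpace K n i j I J) +
        Module.finrank K (tensorGrade K (polyGrade K n)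
          (barDGrade K n (PS K n ⧸ J) (quotGrade K n J) i) j) =
      barRank K n i j I J + Module.finrank K
        (tensorGrade K (polyGrade K n) (barDGrade K n (PS K n) (polyGrade K n) i) j) := by
  have hspace : relationSpace K n i j I J =
      (tensorGrade K (idealGrade K n I)
        (barDGrade K n (PS K n) (polyGrade K n) (i + 1)) j).map
        (barB K n (PS K n) (PS K n) i ∘ₗ (idealIncl K n I).rTensor _) ⊔
      LinearMap.ker (barMkQ K n J i) ⊓
        tensorGrade K (polyGrade K n) (barDGrade K n (PS K n) (polyGrade K n) i) j := by
    rw [ker_barMkQ_inf_tensorGrade hJ]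
    exact LinearMap.map_coprod_prod ..
  have := finiteDimensional_tensorGrade_polyGrade (K := K) (n := n) i j
  rw [hspace, barRank_eq_finrank_map, ← map_barMkQ_tensorGrade]
  exact finrank_sup_ker_inf_add_finrank_map _ (map_barB_comp_rTensor_idealIncl_le I i j)

/-- A family `φ t : I₀ → S` of degree-preserving `K`-linear maps, polynomial in the parameters
`t`, which deforms the inclusion of `I₀`; the values of `φ t` are not required to form an
ideal. -/
structure IsGradedDeformation {σ : Type} (t₀ : σ → K) (I₀ : Ideal (PS K n))
    (φ : (σ → K) → ↥I₀ →ₗ[K] PS K n) : Prop where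
  mem_polyFamilies : ∀ x, (fun t => φ t x) ∈ polyFamilies K σ (PS K n)
  map_idealGrade_le : ∀ t p, (idealGrade K n I₀ p).map (φ t) ≤ polyGrade K n p
  apply_base : φ t₀ = idealIncl K n I₀

theorem map_relationMap_le_relationSpace {I₀ J₀ I J : Ideal (PS K n)} {α : ↥I₀ →ₗ[K] PS K n}
    {β : ↥J₀ →ₗ[K] PS K n} (hα : ∀ p, (idealGrade K n I₀ p).map α ≤ polyGrade K n p)
    (hβ : ∀ p, (idealGrade K n J₀ p).map β ≤ polyGrade K n p) (hαI : ∀ x, α x ∈ I)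
    (hβJ : ∀ x, β x ∈ J) (i : ℕ) (j : ℤ) :
    (relationGrade n (idealGrade K n I₀) (idealGrade K n J₀) i j).map (relationMap α β i) ≤
      relationSpace K n i j I J := by
  let f : ↥I₀ →ₗ[K] ↥I := LinearMap.codRestrict (I.restrictScalars K) α hαI
  let g : ↥J₀ →ₗ[K] ↥J := LinearMap.codRestrict (J.restrictScalars K) β hβJ
  have hf (p : ℤ) : (idealGrade K n I₀ p).map f ≤ idealGrade K n I p := by
    rintro _ ⟨x, hx, rfl⟩
    exact hα p ⟨x, hx, rfl⟩
  have hg (p : ℤ) : (idealGrade K n J₀ p).map g ≤ idealGrade K n J p := by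
    rintro _ ⟨x, hx, rfl⟩
    exact hβ p ⟨x, hx, rfl⟩
  have hcomp : relationMap α β i = relationMap (idealIncl K n I) (idealIncl K n J) i ∘ₗ
      (f.rTensor _).prodMap ((barMap LinearMap.id g i).lTensor _) :=
    relationMap_comp_comp (idealIncl K n I) (idealIncl K n J) f g i
  rw [hcomp, Submodule.map_comp]
  exact Submodule.map_mono (map_prodMap_relationGrade_le hf hg i j)

theorem eventually_barRank_le {σ : Type} {t₀ : σ → K} {I₀ J₀ : Ideal (PS K n)}
    (hI₀ : IsHomog K n I₀) (hJ₀ : IsHomog K n J₀) {α : (σ → K) → ↥I₀ →ₗ[K] PS K n}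
    {β : (σ → K) → ↥J₀ →ₗ[K] PS K n} (hα : IsGradedDeformation t₀ I₀ α)
    (hβ : IsGradedDeformation t₀ J₀ β) (i : ℕ) (j : ℤ) :
    ∀ᶠ t in zariskiNhds t₀, ∀ I J : Ideal (PS K n), IsHomog K n J →
      (∀ p, Module.finrank K (quotGrade K n J₀ p) = Module.finrank K (quotGrade K n J p)) →
      (∀ x, α t x ∈ I) → (∀ x, β t x ∈ J) → barRank K n i j I₀ J₀ ≤ barRank K n i j I J := by
  have := finiteDimensional_relationGrade (n := n) hI₀.isFiniteGrading_idealGrade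
    hJ₀.isFiniteGrading_idealGrade i j
  filter_upwards [eventually_finrank_map_le
    (V := (↥I₀ ⊗[K] barD K n (PS K n) (i + 1)) × (PS K n ⊗[K] barD K n ↥J₀ i))
    (relationMap_mem_polyFamilies hα.mem_polyFamilies hβ.mem_polyFamilies i)
    (relationGrade n (idealGrade K n I₀) (idealGrade K n J₀) i j) t₀] with t ht I J hJ hfin hI hIJ
  rw [hα.apply_base, hβ.apply_base] at ht
  have hle := map_relationMap_le_relationSpace (hα.map_idealGrade_le t) (hβ.map_idealGrade_le t)
    hI hIJ i j
  have := finiteDimensional_relationSpace I J i j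
  have hspace := ht.trans (Submodule.finrank_mono hle)
  have h₀ := finrank_relationSpace_add I₀ hJ₀ i j
  have h := finrank_relationSpace_add I hJ i j
  have hpoly := isFiniteGrading_polyGrade (K := K) (n := n)
  have hstrand := hpoly.finrank_tensorGrade_eq
    (hJ₀.isFiniteGrading_quotGrade.barDGrade (n := n) i) hpoly
    (hJ.isFiniteGrading_quotGrade.barDGrade i) (fun _ => rfl)
    (finrank_barDGrade_eq hJ₀.isFiniteGrading_quotGrade hJ.isFiniteGrading_quotGrade hfin i) j
  rw [← relationSpace] at hspace
  omega

end

/-! ### Changes of coordinates -/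

noncomputable section

variable {K : Type} [Field K] {n : ℕ}

theorem polyProj_apply_of_map_polyGrade_le {f : PS K n →ₗ[K] PS K n}
    (hf : ∀ p, (polyGrade K n p).map f ≤ polyGrade K n p) (p : ℤ) (x : PS K n) :
    polyProj K n p (f x) = f (polyProj K n p x) := by
  have hx : x ∈ iSup (polyGrade K n) := by simp only [iSup_polyGrade, Submodule.mem_top]
  induction hx using Submodule.iSup_induction' with
  | mem q x hx =>
    have hfx := hf q ⟨x, hx, rfl⟩
    rcases eq_or_ne q p with rfl | hq
    · rw [polyProj_of_mem hfx, polyProj_of_mem hx]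
    · rw [polyProj_of_mem_ne hq hfx, polyProj_of_mem_ne hq hx, map_zero]
  | zero => simp only [map_zero]
  | add x y _ _ hx hy => simp only [map_add, hx, hy]

theorem IsHomog.of_polyProj_mem {I : Ideal (PS K n)}
    (h : ∀ (p : ℤ), ∀ x ∈ I, polyProj K n p x ∈ I) : IsHomog K n I :=
  fun f hf d => h d f hf

/-- An automorphism of `S` preserving the standard grading. -/
def IsGradedAut (e : PS K n ≃ₐ[K] PS K n) : Prop :=
  ∀ p x, e x ∈ polyGrade K n p ↔ x ∈ polyGrade K n p

theorem mem_ideal_map_iff {e : PS K n ≃ₐ[K] PS K n} {J : Ideal (PS K n)} {x : PS K n} :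
    x ∈ Ideal.map e J ↔ e.symm x ∈ J := by
  rw [Ideal.mem_map_of_equiv]
  exact ⟨fun ⟨y, hy, hyx⟩ => hyx ▸ (e.symm_apply_apply y).symm ▸ hy,
    fun h => ⟨_, h, e.apply_symm_apply x⟩⟩

namespace IsGradedAut

variable {e : PS K n ≃ₐ[K] PS K n}

theorem symm (he : IsGradedAut e) : IsGradedAut e.symm := fun p x => by
  rw [← he, e.apply_symm_apply]

theorem map_polyGrade_le (he : IsGradedAut e) (p : ℤ) :
    (polyGrade K n p).map e.toLinearMap ≤ polyGrade K n p := by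
  rintro _ ⟨x, hx, rfl⟩
  exact (he p x).2 hx

theorem isHomog_map (he : IsGradedAut e) {J : Ideal (PS K n)} (hJ : IsHomog K n J) :
    IsHomog K n (Ideal.map e J) := by
  refine IsHomog.of_polyProj_mem fun p x hx => ?_
  rw [mem_ideal_map_iff] at hx ⊢
  have hcomm := polyProj_apply_of_map_polyGrade_le he.symm.map_polyGrade_le p x
  exact (congrArg (· ∈ J) hcomm).mp (hJ.polyProj_apply_mem p hx)

theorem finrank_idealGrade_map (he : IsGradedAut e) (J : Ideal (PS K n)) (p : ℤ) :
    Module.finrank K (idealGrade K n (Ideal.map e J) p) =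
      Module.finrank K (idealGrade K n J p) := by
  have hmap : ((Ideal.map e J).restrictScalars K ⊓ polyGrade K n p : Submodule K (PS K n)) =
      (J.restrictScalars K ⊓ polyGrade K n p : Submodule K (PS K n)).map e.toLinearMap := by
    ext x
    refine ⟨fun hx => ⟨e.symm x, ⟨mem_ideal_map_iff.1 hx.1, (he.symm p x).2 hx.2⟩,
      e.apply_symm_apply x⟩, ?_⟩
    rintro ⟨y, hy, rfl⟩
    exact ⟨Ideal.mem_map_of_mem e hy.1, (he p y).2 hy.2⟩
  rw [finrank_idealGrade, finrank_idealGrade, hmap, finrank_map_of_injective _ e.injective]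

end IsGradedAut

theorem finrank_quotGrade_congr {J J' : Ideal (PS K n)} {p : ℤ}
    (h : Module.finrank K (idealGrade K n J p) = Module.finrank K (idealGrade K n J' p)) :
    Module.finrank K (quotGrade K n J p) = Module.finrank K (quotGrade K n J' p) := by
  have hJ := finrank_quotGrade_add_finrank_idealGrade J p
  have hJ' := finrank_quotGrade_add_finrank_idealGrade J' p
  omega

section Semilinear

variable {M N M' N' : Type}
  [AddCommGroup M] [Module K M] [Module (PS K n) M] [IsScalarTower K (PS K n) M]
  [AddCommGroup N] [Module K N] [Module (PS K n) N] [IsScalarTower K (PS K n) N]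
  [AddCommGroup M'] [Module K M'] [Module (PS K n) M'] [IsScalarTower K (PS K n) M']
  [AddCommGroup N'] [Module K N'] [Module (PS K n) N'] [IsScalarTower K (PS K n) N']
  {GM : ℤ → Submodule K M} {GN : ℤ → Submodule K N}
  {GM' : ℤ → Submodule K M'} {GN' : ℤ → Submodule K N'}

theorem finrank_map_barB_le {h : PS K n →ₐ[K] PS K n} {f : M →ₗ[K] M'} {φ : N →ₗ[K] N'}
    (hf : ∀ (s : PS K n) m, f (s • m) = h s • f m) (hφ : ∀ (s : PS K n) x, φ (s • x) = h s • φ x)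
    (hinj : Function.Injective h) (hfinj : Function.Injective f) (hφinj : Function.Injective φ)
    (hgrade : ∀ p, (polyGrade K n p).map h.toLinearMap ≤ polyGrade K n p)
    (hfgrade : ∀ p, (GM p).map f ≤ GM' p) (hφgrade : ∀ p, (GN p).map φ ≤ GN' p)
    (i : ℕ) (j : ℤ) [FiniteDimensional K (tensorGrade K GM' (barDGrade K n N' GN' (i + 1)) j)] :
    Module.finrank K ((tensorGrade K GM (barDGrade K n N GN (i + 1)) j).map (barB K n N M i)) ≤
      Module.finrank K
        ((tensorGrade K GM' (barDGrade K n N' GN' (i + 1)) j).map (barB K n N' M' i)) := by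
  have hmapinj : Function.Injective (TensorProduct.map f (barMap h.toLinearMap φ i)) :=
    TensorProduct.map_injective_of_flat_flat _ _ hfinj (barMap_injective _ _ hinj hφinj i)
  rw [← finrank_map_of_injective _ hmapinj, ← Submodule.map_comp, map_comp_barB h f φ hf hφ i,
    Submodule.map_comp]
  exact Submodule.finrank_mono (Submodule.map_mono (map_tensorGrade_le f _ hfgrade
    (map_barMap_barDGrade_le _ φ hgrade hφgrade (i + 1)) j))

end Semilinear

theorem IsGradedAut.barRank_le_barRank_map {e : PS K n ≃ₐ[K] PS K n} (he : IsGradedAut e)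
    {I J : Ideal (PS K n)} (hI : IsHomog K n I) (hJ : IsHomog K n J) (i : ℕ) (j : ℤ) :
    barRank K n i j I J ≤ barRank K n i j (Ideal.map e I) (Ideal.map e J) := by
  let f : ↥I →ₗ[K] ↥(Ideal.map e I) :=
    LinearMap.codRestrict ((Ideal.map e I).restrictScalars K) (e.toLinearMap ∘ₗ idealIncl K n I)
      fun x => Ideal.mem_map_of_mem e x.2
  let φ := Ideal.quotientEquivAlg J (Ideal.map e J) e rfl
  have := ((he.isHomog_map hI).isFiniteGrading_idealGrade.tensor
    ((he.isHomog_map hJ).isFiniteGrading_quotGrade.barDGrade (n := n) (i + 1))).finiteDimensional j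
  refine finrank_map_barB_le (h := e.toAlgHom) (f := f) (φ := φ.toLinearMap)
    (fun s (m : ↥I) => Subtype.ext (map_mul e s m)) (fun s x => ?_) e.injective
    (fun x y hxy => Subtype.ext (e.injective (congrArg Subtype.val hxy))) φ.injective
    he.map_polyGrade_le ?_ ?_ i j
  · obtain ⟨x, rfl⟩ := idealMkQ_surjective J x
    exact congrArg (idealMkQ K n (Ideal.map e J)) (map_mul e s x)
  · rintro p _ ⟨x, hx, rfl⟩
    exact (he p x).2 hx
  · rintro p _ ⟨_, ⟨x, hx, rfl⟩, rfl⟩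
    exact ⟨e x, (he p x).2 hx, rfl⟩

variable (n) in
/-- The substitution `x_i ↦ ∑ j, a_{ji} x_j` for a matrix `a`, invertible or not. -/
def linearSubst (a : Fin n × Fin n → K) : PS K n →ₐ[K] PS K n :=
  aeval fun i => ∑ j, a (j, i) • X j

theorem linearSubst_mem_polyGrade (a : Fin n × Fin n → K) {p : ℤ} {x : PS K n}
    (hx : x ∈ polyGrade K n p) : linearSubst n a x ∈ polyGrade K n p := by
  have hlin (i : Fin n) :
      (∑ j, a (j, i) • X j : PS K n) ∈ homogeneousSubmodule (Fin n) K 1 :=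
    Submodule.sum_mem _ fun j _ => Submodule.smul_mem _ _ (isHomogeneous_X K j)
  unfold polyGrade at hx ⊢
  split_ifs at hx ⊢ with hp
  · have := IsHomogeneous.aeval hx _ hlin
    rwa [one_mul] at this
  · rw [Submodule.mem_bot] at hx ⊢
    rw [hx, map_zero]

theorem linearSubst_mem_polyFamilies (x : PS K n) :
    (fun a => linearSubst n a x) ∈ polyFamilies K (Fin n × Fin n) (PS K n) := by
  refine aeval_mem_polyFamilies (v := fun i a => ∑ j, a (j, i) • X j) (fun i => ?_) x
  convert Submodule.sum_mem (polyFamilies K (Fin n × Fin n) (PS K n)) fun j (_ : j ∈ Finset.univ) =>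
    eval_smul_mem_polyFamilies (X (j, i)) (X j : PS K n) using 1
  ext a : 1
  simp only [eval_X, Finset.sum_apply]

/-- The entries of an invertible matrix, as a point of the affine space of all matrices. -/
def matrixEntries (g : GL (Fin n) K) : Fin n × Fin n → K :=
  fun p => (g : Matrix (Fin n) (Fin n) K) p.1 p.2

theorem coordChange_X (g : GL (Fin n) K) (i : Fin n) :
    coordChange K n g (X i) = ∑ j, ((g : Matrix (Fin n) (Fin n) K) j i) • X j :=
  aeval_X ..

theorem coordChange_one : coordChange K n 1 = AlgHom.id K (PS K n) := by
  refine MvPolynomial.algHom_ext fun i => ?_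
  simp [coordChange_X, Matrix.one_apply]

theorem coordChange_mul (g g' : GL (Fin n) K) :
    coordChange K n (g * g') = (coordChange K n g).comp (coordChange K n g') := by
  refine MvPolynomial.algHom_ext fun i => ?_
  simp only [AlgHom.comp_apply, coordChange_X, map_sum, map_smul, Finset.smul_sum, smul_smul]
  rw [Finset.sum_comm]
  refine Finset.sum_congr rfl fun k _ => ?_
  rw [← Finset.sum_smul, Units.val_mul, Matrix.mul_apply]
  simp only [mul_comm]

variable (K n) in
/-- The change of coordinates given by `g`, as an automorphism of `S`. -/
def coordEquiv (g : GL (Fin n) K) : PS K n ≃ₐ[K] PS K n :=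
  AlgEquiv.ofAlgHom (coordChange K n g) (coordChange K n g⁻¹)
    (by rw [← coordChange_mul, mul_inv_cancel, coordChange_one])
    (by rw [← coordChange_mul, inv_mul_cancel, coordChange_one])

theorem isGradedAut_coordEquiv (g : GL (Fin n) K) : IsGradedAut (coordEquiv K n g) :=
  fun _ x => ⟨fun hx => (coordEquiv K n g).symm_apply_apply x ▸
    linearSubst_mem_polyGrade (matrixEntries g⁻¹) hx,
    linearSubst_mem_polyGrade (matrixEntries g)⟩

theorem map_coordEquiv_mul (g g' : GL (Fin n) K) (J : Ideal (PS K n)) :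
    Ideal.map (coordEquiv K n (g * g')) J =
      Ideal.map (coordEquiv K n g) (Ideal.map (coordEquiv K n g') J) := by
  change Ideal.map (coordChange K n (g * g')) J = _
  rw [coordChange_mul]
  exact (Ideal.map_mapₐ ..).symm

theorem map_coordEquiv_one (J : Ideal (PS K n)) : Ideal.map (coordEquiv K n 1) J = J := by
  change Ideal.map (coordChange K n 1) J = J
  rw [coordChange_one]
  exact Ideal.map_id J

end

/-! ### Initial ideals -/

noncomputable section

variable {K : Type} [Field K] {n : ℕ} {w : Fin n → ℕ}

variable (K w) in
/-- The polynomials all of whose terms have `w`-weight less than `e`. -/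
def weightLT (e : ℕ) : Submodule K (PS K n) :=
  ⨅ d ≥ e, LinearMap.ker (weightedHomogeneousComponent w d)

theorem mem_weightLT {e : ℕ} {f : PS K n} :
    f ∈ weightLT K w e ↔ ∀ d ≥ e, weightedHomogeneousComponent w d f = 0 := by
  simp only [weightLT, Submodule.mem_iInf, LinearMap.mem_ker]

theorem weightedHomogeneousComponent_weightedHomogeneousComponent (d e : ℕ) (f : PS K n) :
    weightedHomogeneousComponent w d (weightedHomogeneousComponent w e f) =
      if d = e then weightedHomogeneousComponent w e f else 0 :=
  weightedHomogeneousComponent_of_mem (weightedHomogeneousComponent_mem w f e)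

theorem weightedHomogeneousComponent_mem_weightLT (e : ℕ) (f : PS K n) :
    weightedHomogeneousComponent w e f ∈ weightLT K w (e + 1) :=
  mem_weightLT.2 fun d hd => by
    rw [weightedHomogeneousComponent_weightedHomogeneousComponent, if_neg (by omega)]

theorem weightLT_zero : weightLT K w 0 = ⊥ := by
  refine (Submodule.eq_bot_iff _).2 fun f hf => ?_
  rw [← sum_weightedHomogeneousComponent w f]
  simp only [mem_weightLT.1 hf _ (Nat.zero_le _), finsum_zero]

theorem weightLT_eq_ker_inf_weightLT_succ (e : ℕ) :
    weightLT K w e =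
      LinearMap.ker (weightedHomogeneousComponent w e) ⊓ weightLT K w (e + 1) := by
  ext f
  simp only [Submodule.mem_inf, mem_weightLT, LinearMap.mem_ker]
  refine ⟨fun h => ⟨h e le_rfl, fun d hd => h d (by omega)⟩, fun h d hd => ?_⟩
  rcases eq_or_lt_of_le hd with rfl | hd
  exacts [h.1, h.2 d hd]

theorem exists_polyGrade_le_weightLT (p : ℤ) : ∃ e, polyGrade K n p ≤ weightLT K w e := by
  rcases lt_or_ge p 0 with hp | hp
  · exact ⟨0, (polyGrade_eq_bot hp).trans_le bot_le⟩
  lift p to ℕ using hp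
  refine ⟨p * ∑ i, w i + 1, fun f hf => mem_weightLT.2 fun d hd => ?_⟩
  rw [polyGrade_natCast] at hf
  refine weightedHomogeneousComponent_eq_zero' d f fun m hm => ?_
  have hdeg : m.degree = p := by
    rw [Finsupp.degree_eq_weight_one]
    exact hf (mem_support_iff.1 hm)
  have hle : Finsupp.weight w m ≤ p * ∑ i, w i := by
    rw [Finsupp.weight_eq_sum, Finset.mul_sum, ← hdeg]
    exact Finset.sum_le_sum fun i _ => Nat.mul_le_mul_right _ (Finsupp.le_degree i m)
  omega

theorem weightedHomogeneousComponent_X_mul (i : Fin n) (e : ℕ) (f : PS K n) :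
    weightedHomogeneousComponent w (w i + e) (X i * f) =
      X i * weightedHomogeneousComponent w e f := by
  let := weightedGradedAlgebra K w
  have h := DirectSum.coe_decompose_mul_add_of_left_mem (weightedHomogeneousSubmodule K w)
    (b := f) (j := e) (isWeightedHomogeneous_X K w i)
  rwa [← weightedDecomposition.decompose'_apply, ← weightedDecomposition.decompose'_apply]

theorem X_mul_mem_weightLT (i : Fin n) {e : ℕ} {f : PS K n} (hf : f ∈ weightLT K w e) :
    X i * f ∈ weightLT K w (w i + e) := by
  refine mem_weightLT.2 fun d hd => ?_
  obtain ⟨d, rfl⟩ := Nat.exists_eq_add_of_le (le_of_add_le_left hd)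
  rw [weightedHomogeneousComponent_X_mul, mem_weightLT.1 hf d (by omega), mul_zero]

theorem weightedHomogeneousComponent_mem_polyGrade (e : ℕ) {p : ℤ} {f : PS K n}
    (hf : f ∈ polyGrade K n p) : weightedHomogeneousComponent w e f ∈ polyGrade K n p := by
  classical
  rcases lt_or_ge p 0 with hp | hp
  · rw [polyGrade_eq_bot hp, Submodule.mem_bot] at hf
    rw [hf, map_zero]
    exact zero_mem _
  lift p to ℕ using hp
  rw [polyGrade_natCast] at hf ⊢
  intro m hm
  rw [coeff_weightedHomogeneousComponent] at hm
  exact hf fun h => hm (by rw [h, ite_self])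

theorem polyProj_weightedHomogeneousComponent (p : ℤ) (e : ℕ) (f : PS K n) :
    polyProj K n p (weightedHomogeneousComponent w e f) =
      weightedHomogeneousComponent w e (polyProj K n p f) := by
  refine polyProj_apply_of_map_polyGrade_le (fun q => ?_) p f
  rintro _ ⟨x, hx, rfl⟩
  exact weightedHomogeneousComponent_mem_polyGrade e hx

theorem polyProj_mem_weightLT (p : ℤ) {e : ℕ} {f : PS K n} (hf : f ∈ weightLT K w e) :
    polyProj K n p f ∈ weightLT K w e :=
  mem_weightLT.2 fun d hd => by
    rw [← polyProj_weightedHomogeneousComponent, mem_weightLT.1 hf d hd, map_zero]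

theorem initialForm_eq (f : PS K n) :
    initialForm K n w f = weightedHomogeneousComponent w (weightedTotalDegree w f) f := by
  classical
  have hwdeg : wdeg n w = Finsupp.weight w := by
    ext m
    rw [wdeg, Finsupp.weight_eq_sum]
    exact Finset.sum_congr rfl fun i _ => mul_comm _ _
  rw [initialForm, weightedHomogeneousComponent_apply, hwdeg]
  rfl

theorem mem_weightLT_weightedTotalDegree_succ (f : PS K n) :
    f ∈ weightLT K w (weightedTotalDegree w f + 1) :=
  mem_weightLT.2 fun d hd => weightedHomogeneousComponent_eq_zero d f (by omega)

theorem weightedHomogeneousComponent_eq_initialForm {e : ℕ} {f : PS K n}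
    (hf : f ∈ weightLT K w (e + 1)) (hne : weightedHomogeneousComponent w e f ≠ 0) :
    weightedHomogeneousComponent w e f = initialForm K n w f := by
  classical
  rw [initialForm_eq]
  suffices e = weightedTotalDegree w f by rw [← this]
  refine le_antisymm (not_lt.1 fun hlt => hne (weightedHomogeneousComponent_eq_zero e f hlt)) ?_
  refine Finset.sup_le fun m hm => not_lt.1 fun hlt => mem_support_iff.1 hm ?_
  have h := congrArg (coeff m) (mem_weightLT.1 hf _ hlt)
  rwa [coeff_weightedHomogeneousComponent, if_pos rfl] at h

variable (w) in
/-- The `w`-weight-`e` components of the elements of `I` of `w`-weight at most `e`: the elements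
of `in_w(I)` that are `w`-homogeneous of weight `e`. -/
def initialPiece (I : Ideal (PS K n)) (e : ℕ) : Submodule K (PS K n) :=
  (I.restrictScalars K ⊓ weightLT K w (e + 1)).map (weightedHomogeneousComponent w e)

theorem X_mul_mem_iSup_initialPiece {I : Ideal (PS K n)} (i : Fin n) {x : PS K n}
    (hx : x ∈ ⨆ e, initialPiece w I e) : X i * x ∈ ⨆ e, initialPiece w I e := by
  induction hx using Submodule.iSup_induction' with
  | mem e x hx =>
    obtain ⟨f, ⟨hfI, hf⟩, rfl⟩ := hx
    have hXf : X i * f ∈ I.restrictScalars K ⊓ weightLT K w (w i + e + 1) :=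
      ⟨I.mul_mem_left _ hfI, by rw [add_assoc]; exact X_mul_mem_weightLT i hf⟩
    rw [← weightedHomogeneousComponent_X_mul]
    exact Submodule.mem_iSup_of_mem (w i + e) (Submodule.mem_map_of_mem hXf)
  | zero => simp only [mul_zero, zero_mem]
  | add x y _ _ hx hy => simpa only [mul_add] using add_mem hx hy

theorem mul_mem_iSup_initialPiece {I : Ideal (PS K n)} (s : PS K n) {x : PS K n}
    (hx : x ∈ ⨆ e, initialPiece w I e) : s * x ∈ ⨆ e, initialPiece w I e := by
  induction s using MvPolynomial.induction_on generalizing x with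
  | C a => simpa only [C_mul'] using Submodule.smul_mem _ a hx
  | add s t hs ht => simpa only [add_mul] using add_mem (hs hx) (ht hx)
  | mul_X s i hs => simpa only [mul_assoc] using hs (X_mul_mem_iSup_initialPiece i hx)

theorem initialPiece_le (I : Ideal (PS K n)) (e : ℕ) :
    initialPiece w I e ≤ (initialIdealW K n w I).restrictScalars K := by
  rintro _ ⟨f, ⟨hfI, hf⟩, rfl⟩
  by_cases hne : weightedHomogeneousComponent w e f = 0
  · rw [hne]
    exact zero_mem _
  · exact Ideal.subset_span ⟨f, hfI, weightedHomogeneousComponent_eq_initialForm hf hne⟩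

theorem restrictScalars_initialIdealW (I : Ideal (PS K n)) :
    (initialIdealW K n w I).restrictScalars K = ⨆ e, initialPiece w I e := by
  refine le_antisymm (fun x hx => ?_) (iSup_le (initialPiece_le I))
  induction hx using Submodule.span_induction with
  | mem x hx =>
    obtain ⟨f, hf, rfl⟩ := hx
    rw [initialForm_eq]
    exact Submodule.mem_iSup_of_mem _ ⟨f, ⟨hf, mem_weightLT_weightedTotalDegree_succ f⟩, rfl⟩
  | zero => exact zero_mem _
  | add x y _ _ hx hy => exact add_mem hx hy
  | smul s x _ hx => exact mul_mem_iSup_initialPiece s hx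

theorem IsHomog.isHomog_initialIdealW {I : Ideal (PS K n)} (hI : IsHomog K n I) :
    IsHomog K n (initialIdealW K n w I) := by
  refine IsHomog.of_polyProj_mem fun p x hx => ?_
  replace hx : x ∈ ⨆ e, initialPiece w I e := restrictScalars_initialIdealW I ▸ hx
  induction hx using Submodule.iSup_induction' with
  | mem e x hx =>
    obtain ⟨f, ⟨hfI, hf⟩, rfl⟩ := hx
    rw [polyProj_weightedHomogeneousComponent]
    exact initialPiece_le I e
      ⟨_, ⟨hI.polyProj_apply_mem p hfI, polyProj_mem_weightLT p hf⟩, rfl⟩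
  | zero => simp only [map_zero, zero_mem]
  | add x y _ _ hx hy => simpa only [map_add] using add_mem hx hy

theorem weightedHomogeneousComponent_mem_initialPiece {I : Ideal (PS K n)} {x : PS K n}
    (hx : x ∈ initialIdealW K n w I) (e : ℕ) :
    weightedHomogeneousComponent w e x ∈ initialPiece w I e := by
  replace hx : x ∈ ⨆ e, initialPiece w I e := restrictScalars_initialIdealW I ▸ hx
  induction hx using Submodule.iSup_induction' with
  | mem d x hx =>
    obtain ⟨f, hf, rfl⟩ := hx
    rw [weightedHomogeneousComponent_weightedHomogeneousComponent]
    split_ifs with h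
    · exact ⟨f, h ▸ hf, h ▸ rfl⟩
    · exact zero_mem _
  | zero => simp only [map_zero, zero_mem]
  | add x y _ _ hx hy => simpa only [map_add] using add_mem hx hy

theorem finrank_eq_of_map_weightedHomogeneousComponent_eq {A B : Submodule K (PS K n)}
    [FiniteDimensional K A] [FiniteDimensional K B] {e : ℕ} (hA : A ≤ weightLT K w e)
    (hB : B ≤ weightLT K w e)
    (h : ∀ d, (A ⊓ weightLT K w (d + 1)).map (weightedHomogeneousComponent w d) =
      (B ⊓ weightLT K w (d + 1)).map (weightedHomogeneousComponent w d)) :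
    Module.finrank K A = Module.finrank K B := by
  suffices hd : ∀ d, Module.finrank K (A ⊓ weightLT K w d : Submodule K (PS K n)) =
      Module.finrank K (B ⊓ weightLT K w d : Submodule K (PS K n)) by
    have he := hd e
    rwa [inf_eq_left.2 hA, inf_eq_left.2 hB] at he
  intro d
  induction d with
  | zero => rw [weightLT_zero, inf_bot_eq, inf_bot_eq]
  | succ d ih =>
    rw [weightLT_eq_ker_inf_weightLT_succ, inf_left_comm, inf_left_comm B] at ih
    rw [← finrank_map_add_finrank_ker_inf (weightedHomogeneousComponent w d) (A ⊓ _),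
      ← finrank_map_add_finrank_ker_inf (weightedHomogeneousComponent w d) (B ⊓ _), h, ih]

theorem map_initialIdealW_inf_eq {I : Ideal (PS K n)} (hI : IsHomog K n I) (p : ℤ) (e : ℕ) :
    ((initialIdealW K n w I).restrictScalars K ⊓ polyGrade K n p ⊓ weightLT K w (e + 1)).map
        (weightedHomogeneousComponent w e) =
      (I.restrictScalars K ⊓ polyGrade K n p ⊓ weightLT K w (e + 1)).map
        (weightedHomogeneousComponent w e) := by
  refine le_antisymm ?_ ?_
  · rintro _ ⟨x, ⟨⟨hxI, hxp⟩, -⟩, rfl⟩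
    obtain ⟨f, ⟨hfI, hf⟩, hfx⟩ := weightedHomogeneousComponent_mem_initialPiece hxI e
    refine ⟨polyProj K n p f, ⟨⟨hI.polyProj_apply_mem p hfI, polyProj_mem p f⟩,
      polyProj_mem_weightLT p hf⟩, ?_⟩
    rw [← polyProj_weightedHomogeneousComponent, hfx, polyProj_weightedHomogeneousComponent,
      polyProj_of_mem hxp]
  · rintro _ ⟨f, ⟨⟨hfI, hfp⟩, hf⟩, rfl⟩
    refine ⟨weightedHomogeneousComponent w e f, ⟨⟨initialPiece_le I e ⟨f, ⟨hfI, hf⟩, rfl⟩,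
      weightedHomogeneousComponent_mem_polyGrade e hfp⟩,
      weightedHomogeneousComponent_mem_weightLT e f⟩, ?_⟩
    rw [weightedHomogeneousComponent_weightedHomogeneousComponent, if_pos rfl]

theorem finrank_idealGrade_initialIdealW {I : Ideal (PS K n)} (hI : IsHomog K n I) (p : ℤ) :
    Module.finrank K (idealGrade K n (initialIdealW K n w I) p) =
      Module.finrank K (idealGrade K n I p) := by
  obtain ⟨e, he⟩ := exists_polyGrade_le_weightLT (K := K) (w := w) p
  have := (isFiniteGrading_polyGrade (K := K) (n := n)).finiteDimensional p
  rw [finrank_idealGrade, finrank_idealGrade]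
  exact finrank_eq_of_map_weightedHomogeneousComponent_eq (inf_le_right.trans he)
    (inf_le_right.trans he) (map_initialIdealW_inf_eq hI p)

end

/-! ### Gröbner degenerations -/

noncomputable section

variable {K : Type} [Field K] {n : ℕ}

section Families

variable {σ ι A V : Type} [AddCommGroup A] [Module K A] [AddCommGroup V] [Module K V]

theorem constr_mem_polyFamilies (b : Module.Basis ι K A) {u : ι → (σ → K) → V}
    (hu : ∀ k, u k ∈ polyFamilies K σ V) (x : A) :
    (fun t => b.constr K (fun k => u k t) x) ∈ polyFamilies K σ V := by
  induction b.mem_span x using Submodule.span_induction with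
  | mem x hx =>
    obtain ⟨k, rfl⟩ := hx
    simpa only [Module.Basis.constr_basis] using hu k
  | zero => simpa only [map_zero] using const_mem_polyFamilies 0
  | add x y _ _ hx hy => simp only [map_add]; exact add_mem hx hy
  | smul c x _ hx => simp only [map_smul]; exact Submodule.smul_mem _ c hx

theorem map_constr_collectedBasis_le {G : ℤ → Submodule K A} (hG : DirectSum.IsInternal G)
    {α : ℤ → Type} (v : ∀ p, Module.Basis (α p) K (G p)) {u : (Σ p, α p) → V}
    {H : ℤ → Submodule K V} (hu : ∀ a, u a ∈ H a.1) (p : ℤ) :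
    (G p).map ((hG.collectedBasis v).constr K u) ≤ H p := by
  rintro _ ⟨x, hx, rfl⟩
  obtain ⟨y, rfl⟩ : ∃ y : G p, (G p).subtype y = x := ⟨⟨x, hx⟩, rfl⟩
  induction (v p).mem_span y using Submodule.span_induction with
  | mem y hy =>
    obtain ⟨k, rfl⟩ := hy
    have hb : hG.collectedBasis v ⟨p, k⟩ = (G p).subtype (v p k) :=
      congrFun (hG.collectedBasis_coe v) ⟨p, k⟩
    rw [← hb, Module.Basis.constr_basis]
    exact hu ⟨p, k⟩
  | zero => simp only [map_zero, zero_mem]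
  | add y z _ _ hy hz => simpa only [map_add] using add_mem (hy y.2) (hz z.2)
  | smul c y _ hy => simpa only [map_smul] using Submodule.smul_mem _ c (hy y.2)

theorem exists_linearMap_family {G : ℤ → Submodule K A} (hG : DirectSum.IsInternal G)
    {t₀ : σ → K} (L : A →ₗ[K] V) (H : ℤ → Submodule K V) (τ : ι → σ → K) (T : ι → Submodule K V)
    (h : ∀ p, ∀ x ∈ G p, ∃ u ∈ polyFamilies K σ V, u t₀ = L x ∧ (∀ t, u t ∈ H p) ∧
      ∀ k, u (τ k) ∈ T k) :
    ∃ φ : (σ → K) → A →ₗ[K] V, (∀ x, (fun t => φ t x) ∈ polyFamilies K σ V) ∧ φ t₀ = L ∧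
      (∀ t p, (G p).map (φ t) ≤ H p) ∧ ∀ k x, φ (τ k) x ∈ T k := by
  let v (p : ℤ) := Module.Basis.ofVectorSpace K (G p)
  let b := hG.collectedBasis v
  choose u hu hu₀ huH huT using fun a => h a.1 (b a) (hG.collectedBasis_mem v a)
  refine ⟨fun t => b.constr K fun a => u a t, constr_mem_polyFamilies b hu,
    b.ext fun a => (b.constr_basis ..).trans (hu₀ a),
    fun t => map_constr_collectedBasis_le hG v fun a => huH a t, fun k x => ?_⟩
  have hrange : LinearMap.range (b.constr K fun a => u a (τ k)) ≤ T k := by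
    rw [Module.Basis.constr_range, Submodule.span_le]
    exact Set.range_subset_iff.2 fun a => huT a k
  exact hrange ⟨x, rfl⟩

end Families

/-- The diagonal matrix of the change of coordinates `x_i ↦ t^{-w_i} x_i`. -/
def weightTorus (w : Fin n → ℕ) (t : Kˣ) : GL (Fin n) K where
  val := Matrix.diagonal fun i => ((t⁻¹ : Kˣ) : K) ^ w i
  inv := Matrix.diagonal fun i => (t : K) ^ w i
  val_inv := by simp [Matrix.diagonal_mul_diagonal]
  inv_val := by simp [Matrix.diagonal_mul_diagonal]

theorem coordChange_weightTorus (w : Fin n → ℕ) (t : Kˣ) :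
    coordChange K n (weightTorus w t) = diagCoord K n w t := by
  refine MvPolynomial.algHom_ext fun i => ?_
  rw [coordChange_X, diagCoord, aeval_X, Finset.sum_eq_single i]
  · simp [weightTorus]
  · intro j _ hj
    simp [weightTorus, Matrix.diagonal_apply_ne _ hj]
  · simp

variable {w : Fin n → ℕ}

theorem diagCoord_of_isWeightedHomogeneous (t : Kˣ) {d : ℕ} {f : PS K n}
    (hf : IsWeightedHomogeneous w f d) : diagCoord K n w t f = ((t⁻¹ : Kˣ) : K) ^ d • f := by
  conv_lhs => rw [f.as_sum]
  conv_rhs => rw [f.as_sum]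
  rw [map_sum, Finset.smul_sum]
  refine Finset.sum_congr rfl fun m hm => ?_
  have hd : ∑ i, m i * w i = d := by
    rw [← hf (mem_support_iff.1 hm), Finsupp.weight_eq_sum]
    rfl
  rw [diagCoord, aeval_monomial, monomial_eq, Finsupp.prod_fintype _ _ (by simp),
    Finsupp.prod_fintype _ _ (by simp), ← hd]
  simp only [smul_pow, Finset.prod_smul, ← pow_mul, algebraMap_eq, mul_comm (m _),
    Finset.prod_pow_eq_pow_sum, mul_smul_comm]

theorem sum_range_weightedHomogeneousComponent {e : ℕ} {f : PS K n} (hf : f ∈ weightLT K w e) :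
    ∑ d ∈ Finset.range e, weightedHomogeneousComponent w d f = f := by
  conv_rhs => rw [← sum_weightedHomogeneousComponent w f]
  refine (finsum_eq_sum_of_support_subset _ fun d hd => ?_).symm
  simpa using not_le.1 fun hde => hd (mem_weightLT.1 hf d hde)

theorem exists_polyFamily_of_mem_weightLT {e : ℕ} {f : PS K n} (hf : f ∈ weightLT K w (e + 1)) :
    ∃ u ∈ polyFamilies K Unit (PS K n), u 0 = weightedHomogeneousComponent w e f ∧
      ∀ t : Kˣ, u (fun _ => t) = (t : K) ^ e • diagCoord K n w t f := by
  refine ⟨fun t => ∑ d ∈ Finset.range (e + 1), t () ^ (e - d) •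
    weightedHomogeneousComponent w d f, ?_, ?_, fun t => ?_⟩
  · convert Submodule.sum_mem _ fun d (_ : d ∈ Finset.range (e + 1)) =>
      eval_smul_mem_polyFamilies (X () ^ (e - d)) (weightedHomogeneousComponent w d f)
    simp
  · have hzero (d : ℕ) (hd : d ∈ Finset.range (e + 1)) (hde : d ≠ e) :
        (0 : Unit → K) () ^ (e - d) • weightedHomogeneousComponent w d f = 0 := by
      have : e - d ≠ 0 := by have := Finset.mem_range.1 hd; omega
      simp [this]
    exact (Finset.sum_eq_single_of_mem e (Finset.self_mem_range_succ e) hzero).trans (by simp)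
  · conv_rhs => rw [← sum_range_weightedHomogeneousComponent hf]
    rw [map_sum, Finset.smul_sum]
    refine Finset.sum_congr rfl fun d hd => ?_
    have hde : e - d + d = e := Nat.sub_add_cancel (Nat.le_of_lt_succ (Finset.mem_range.1 hd))
    have hpow : (t : K) ^ e * ((t⁻¹ : Kˣ) : K) ^ d = (t : K) ^ (e - d) := by
      conv_lhs => rw [← hde, pow_add, mul_assoc, ← mul_pow, Units.mul_inv, one_pow, mul_one]
    rw [diagCoord_of_isWeightedHomogeneous t
      (weightedHomogeneousComponent_isWeightedHomogeneous d f), smul_smul, hpow]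

theorem exists_polyFamily_of_mem_initialIdealW {I : Ideal (PS K n)} {x : PS K n}
    (hx : x ∈ initialIdealW K n w I) :
    ∃ u ∈ polyFamilies K Unit (PS K n), u 0 = x ∧
      ∀ t : Kˣ, u (fun _ => t) ∈ Ideal.map (coordEquiv K n (weightTorus w t)) I := by
  replace hx : x ∈ ⨆ e, initialPiece w I e := restrictScalars_initialIdealW I ▸ hx
  induction hx using Submodule.iSup_induction' with
  | mem e x hx =>
    obtain ⟨f, ⟨hfI, hf⟩, rfl⟩ := hx
    obtain ⟨u, hu, hu₀, hut⟩ := exists_polyFamily_of_mem_weightLT hf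
    refine ⟨u, hu, hu₀, fun t => ?_⟩
    rw [hut, ← coordChange_weightTorus]
    exact Submodule.smul_of_tower_mem _ _ (Ideal.mem_map_of_mem _ hfI)
  | zero => exact ⟨0, zero_mem _, rfl, fun t => zero_mem _⟩
  | add x y _ _ hx hy =>
    obtain ⟨u, hu, rfl, hut⟩ := hx
    obtain ⟨v, hv, rfl, hvt⟩ := hy
    exact ⟨u + v, add_mem hu hv, rfl, fun t => add_mem (hut t) (hvt t)⟩

theorem IsHomog.exists_isGradedDeformation_initialIdealW {I : Ideal (PS K n)}
    (hI : IsHomog K n I) (w : Fin n → ℕ) :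
    ∃ φ : (Unit → K) → ↥(initialIdealW K n w I) →ₗ[K] PS K n,
      IsGradedDeformation 0 (initialIdealW K n w I) φ ∧
        ∀ (t : Kˣ) x, φ (fun _ => t) x ∈ Ideal.map (coordEquiv K n (weightTorus w t)) I := by
  have hfamily (p : ℤ) (x : ↥(initialIdealW K n w I))
      (hxp : x ∈ idealGrade K n (initialIdealW K n w I) p) :
      ∃ u ∈ polyFamilies K Unit (PS K n), u 0 = idealIncl K n (initialIdealW K n w I) x ∧
        (∀ t, u t ∈ polyGrade K n p) ∧ ∀ t : Kˣ, u (fun _ => t) ∈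
          (Ideal.map (coordEquiv K n (weightTorus w t)) I).restrictScalars K := by
    obtain ⟨u, hu, hu₀, hut⟩ := exists_polyFamily_of_mem_initialIdealW x.2
    refine ⟨_, map_mem_polyFamilies (polyProj K n p) hu, ?_, fun t => polyProj_mem p _, fun t =>
      ((isGradedAut_coordEquiv _).isHomog_map hI).polyProj_apply_mem p (hut t)⟩
    exact (congrArg _ hu₀).trans (polyProj_of_mem hxp)
  obtain ⟨φ, hφ, hφ₀, hφp, hφt⟩ := exists_linearMap_family
    hI.isHomog_initialIdealW.isFiniteGrading_idealGrade.isInternal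
    (idealIncl K n (initialIdealW K n w I)) (polyGrade K n) _ _ hfamily
  exact ⟨φ, ⟨hφ, hφp, hφ₀⟩, hφt⟩

end

/-! ### Tor and the ranks of the bar differentials -/

noncomputable section

variable {K : Type} [Field K] {n : ℕ}

section TorStrand

variable {M N : Type}
  [AddCommGroup M] [Module K M] [Module (PS K n) M] [IsScalarTower K (PS K n) M]
  [AddCommGroup N] [Module K N] [Module (PS K n) N] [IsScalarTower K (PS K n) N]
  {GM : ℤ → Submodule K M} {GN : ℤ → Submodule K N}
  [SetLike.GradedSMul (polyGrade K n) GM] [SetLike.GradedSMul (polyGrade K n) GN]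

theorem range_barB_inf_tensorGrade (hM : IsFiniteGrading GM) (hN : IsFiniteGrading GN)
    (i : ℕ) (j : ℤ) :
    LinearMap.range (barB K n N M i) ⊓ tensorGrade K GM (barDGrade K n N GN i) j =
      (tensorGrade K GM (barDGrade K n N GN (i + 1)) j).map (barB K n N M i) := by
  refine le_antisymm ?_ (le_inf LinearMap.map_le_range (map_barB_tensorGrade_le i j))
  rintro _ ⟨⟨x, rfl⟩, hx⟩
  exact (hM.tensor (hN.barDGrade (n := n) (i + 1))).exists_mem_of_apply_mem
    (hM.tensor (hN.barDGrade i)) _ (map_barB_tensorGrade_le i) hx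

theorem torStrandDim_zero_eq (hM : IsFiniteGrading GM) (hN : IsFiniteGrading GN) (j : ℤ) :
    torStrandDim K n N M GM GN 0 j =
      Module.finrank K (tensorGrade K GM (barDGrade K n N GN 0) j) -
        Module.finrank K ((tensorGrade K GM (barDGrade K n N GN 1) j).map (barB K n N M 0)) := by
  rw [← range_barB_inf_tensorGrade hM hN, torStrandDim]

theorem torStrandDim_succ_eq (hM : IsFiniteGrading GM) (hN : IsFiniteGrading GN)
    (i : ℕ) (j : ℤ) :
    torStrandDim K n N M GM GN (i + 1) j =
      Module.finrank K (tensorGrade K GM (barDGrade K n N GN (i + 1)) j) -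
        Module.finrank K
          ((tensorGrade K GM (barDGrade K n N GN (i + 1)) j).map (barB K n N M i)) -
        Module.finrank K
          ((tensorGrade K GM (barDGrade K n N GN (i + 2)) j).map (barB K n N M (i + 1))) := by
  have := (hM.tensor (hN.barDGrade (n := n) (i + 1))).finiteDimensional j
  rw [← range_barB_inf_tensorGrade hM hN (i + 1), torStrandDim,
    ← finrank_map_add_finrank_ker_inf (barB K n N M i) (tensorGrade ..), Nat.add_sub_cancel_left]

theorem torStrandDim_eq_zero (hM : IsFiniteGrading GM) (hN : IsFiniteGrading GN) {i : ℕ} {j : ℤ}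
    (hij : j < i) : torStrandDim K n N M GM GN i j = 0 := by
  have hle := le_inf (barCycles_inf_tensorGrade_le_range (K := K) (n := n) (GN := GN)
    hN.eq_bot_of_neg j i (GM := GM) hM.eq_bot_of_neg (by omega)) inf_le_right
  have := (hM.tensor (hN.barDGrade (n := n) i)).finiteDimensional j
  have := Submodule.finiteDimensional_of_le (inf_le_right :
    LinearMap.range (barB K n N M i) ⊓ tensorGrade K GM (barDGrade K n N GN i) j ≤ _)
  have hfinrank := Submodule.finrank_mono hle
  cases i with
  | zero =>
    rw [barCycles, top_inf_eq] at hfinrank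
    exact Nat.sub_eq_zero_of_le hfinrank
  | succ i => exact Nat.sub_eq_zero_of_le hfinrank

end TorStrand

theorem torIQ_le_torIQ {I J I' J' : Ideal (PS K n)} (hI : IsHomog K n I) (hJ : IsHomog K n J)
    (hI' : IsHomog K n I') (hJ' : IsHomog K n J')
    (hII' : ∀ p, Module.finrank K (idealGrade K n I p) = Module.finrank K (idealGrade K n I' p))
    (hJJ' : ∀ p, Module.finrank K (idealGrade K n J p) = Module.finrank K (idealGrade K n J' p))
    {j : ℤ} (hrank : ∀ i : ℕ, i ≤ j → barRank K n i j I' J' ≤ barRank K n i j I J) (i : ℕ) :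
    torIQ K n I J i j ≤ torIQ K n I' J' i j := by
  rcases lt_or_ge j i with hij | hij
  · have hzero : torIQ K n I J i j = 0 :=
      torStrandDim_eq_zero hI.isFiniteGrading_idealGrade hJ.isFiniteGrading_quotGrade hij
    rw [hzero]
    exact Nat.zero_le _
  have hstrand := hI.isFiniteGrading_idealGrade.finrank_tensorGrade_eq
    (hJ.isFiniteGrading_quotGrade.barDGrade (n := n) i) hI'.isFiniteGrading_idealGrade
    (hJ'.isFiniteGrading_quotGrade.barDGrade i) hII' (finrank_barDGrade_eq
      hJ.isFiniteGrading_quotGrade hJ'.isFiniteGrading_quotGrade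
      (fun p => finrank_quotGrade_congr (hJJ' p)) i) j
  cases i with
  | zero =>
    have h := torStrandDim_zero_eq (n := n) hI.isFiniteGrading_idealGrade
      hJ.isFiniteGrading_quotGrade j
    have h' := torStrandDim_zero_eq (n := n) hI'.isFiniteGrading_idealGrade
      hJ'.isFiniteGrading_quotGrade j
    rw [torIQ, torIQ, h, h', hstrand]
    exact Nat.sub_le_sub_left (hrank 0 hij) _
  | succ i =>
    have h := torStrandDim_succ_eq (n := n) hI.isFiniteGrading_idealGrade
      hJ.isFiniteGrading_quotGrade i j
    have h' := torStrandDim_succ_eq (n := n) hI'.isFiniteGrading_idealGrade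
      hJ'.isFiniteGrading_quotGrade i j
    rw [torIQ, torIQ, h, h', hstrand]
    exact tsub_le_tsub (Nat.sub_le_sub_left (hrank i (by omega)) _) (hrank (i + 1) hij)

theorem exists_barRank_initialIdealW_le [Infinite K] {I J : Ideal (PS K n)} (hI : IsHomog K n I)
    (hJ : IsHomog K n J) (w w' : Fin n → ℕ) (s : Finset ℕ) (j : ℤ) :
    ∃ g : GL (Fin n) K, ∀ i ∈ s,
      barRank K n i j (initialIdealW K n w I) (initialIdealW K n w' J) ≤
        barRank K n i j I (Ideal.map (coordEquiv K n g) J) := by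
  obtain ⟨α, hα, hαI⟩ := hI.exists_isGradedDeformation_initialIdealW w
  obtain ⟨β, hβ, hβJ⟩ := hJ.exists_isGradedDeformation_initialIdealW w'
  obtain ⟨t, ht⟩ := exists_units_of_eventually_zariskiNhds ((Filter.eventually_all_finset s).2
    fun i _ => eventually_barRank_le hI.isHomog_initialIdealW hJ.isHomog_initialIdealW hα hβ i j)
  let g := weightTorus w t
  let g' := weightTorus w' t
  have hgI := (isGradedAut_coordEquiv g).isHomog_map hI
  have hgJ := (isGradedAut_coordEquiv g').isHomog_map hJ
  refine ⟨g⁻¹ * g', fun i hi => ?_⟩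
  calc barRank K n i j (initialIdealW K n w I) (initialIdealW K n w' J)
      ≤ barRank K n i j (Ideal.map (coordEquiv K n g) I) (Ideal.map (coordEquiv K n g') J) :=
        ht i hi _ _ hgJ (fun p => finrank_quotGrade_congr <| by
          rw [finrank_idealGrade_initialIdealW hJ,
            (isGradedAut_coordEquiv g').finrank_idealGrade_map]) (hαI t) (hβJ t)
    _ ≤ barRank K n i j (Ideal.map (coordEquiv K n g⁻¹) (Ideal.map (coordEquiv K n g) I))
          (Ideal.map (coordEquiv K n g⁻¹) (Ideal.map (coordEquiv K n g') J)) :=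
        (isGradedAut_coordEquiv g⁻¹).barRank_le_barRank_map hgI hgJ i j
    _ = barRank K n i j I (Ideal.map (coordEquiv K n (g⁻¹ * g')) J) := by
        rw [← map_coordEquiv_mul, ← map_coordEquiv_mul, inv_mul_cancel, map_coordEquiv_one]


theorem isGradedDeformation_idealIncl {σ : Type} (t₀ : σ → K) (I : Ideal (PS K n)) :
    IsGradedDeformation t₀ I fun _ => idealIncl K n I where
  mem_polyFamilies _ := const_mem_polyFamilies _
  map_idealGrade_le _ p := by
    rintro _ ⟨x, hx, rfl⟩
    exact hx
  apply_base := rfl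

theorem isGradedDeformation_linearSubst (g : GL (Fin n) K) (J : Ideal (PS K n)) :
    IsGradedDeformation (matrixEntries g) J fun a =>
      (linearSubst n a).toLinearMap ∘ₗ (coordChange K n g⁻¹).toLinearMap ∘ₗ idealIncl K n J where
  mem_polyFamilies _ := linearSubst_mem_polyFamilies _
  map_idealGrade_le a p := by
    rintro _ ⟨x, hx, rfl⟩
    exact linearSubst_mem_polyGrade a (linearSubst_mem_polyGrade (matrixEntries g⁻¹) hx)
  apply_base := LinearMap.ext fun x => (coordEquiv K n g).apply_symm_apply x

theorem generally_of_eventually_zariskiNhds {g₀ : GL (Fin n) K} {Q : (Fin n × Fin n → K) → Prop}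
    (h : ∀ᶠ a in zariskiNhds (matrixEntries g₀), Q a) :
    generally K n fun g => Q (matrixEntries g) := by
  obtain ⟨F, hF₀, hF⟩ := eventually_zariskiNhds_iff.1 h
  exact ⟨F, fun h0 => hF₀ (by rw [h0, map_zero]), fun g => hF (matrixEntries g)⟩

theorem generally_barRank_map_le {I J : Ideal (PS K n)} (hI : IsHomog K n I)
    (hJ : IsHomog K n J) (g₀ : GL (Fin n) K) (s : Finset ℕ) (j : ℤ) :
    generally K n fun g => ∀ i ∈ s,
      barRank K n i j I (Ideal.map (coordEquiv K n g₀) J) ≤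
        barRank K n i j I (Ideal.map (coordEquiv K n g) J) := by
  obtain ⟨F, hF, h⟩ := generally_of_eventually_zariskiNhds ((Filter.eventually_all_finset s).2
    fun i _ => eventually_barRank_le hI ((isGradedAut_coordEquiv g₀).isHomog_map hJ)
      (isGradedDeformation_idealIncl _ I) (isGradedDeformation_linearSubst g₀ _) i j)
  refine ⟨F, hF, fun g hg i hi => h g hg i hi _ _ ((isGradedAut_coordEquiv g).isHomog_map hJ)
    (fun p => finrank_quotGrade_congr <| ?_) (fun x => x.2) fun x => ?_⟩
  · rw [(isGradedAut_coordEquiv g₀).finrank_idealGrade_map,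
      (isGradedAut_coordEquiv g).finrank_idealGrade_map]
  · exact Ideal.mem_map_of_mem (coordEquiv K n g) (mem_ideal_map_iff.1 x.2)

end

noncomputable section

variable (K : Type) [Field K] (n : ℕ)

/-- **Proposition 2.6(ii)** (Caviglia–Murai): fix `j`, homogeneous ideals `I, J ⊆ S` and
weights `w, w' ∈ ℤ_{≥0}^n`.  For a general change of coordinates `g ∈ GL_n(K)`,
`dim_K Tor_i(I, S/g(J))_j ≤ dim_K Tor_i(in_w(I), S/in_{w'}(J))_j` for all `i`. -/
theorem tor_dim_general_le_initial_weights_ideal [Infinite K] (j : ℤ)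
    (w w' : Fin n → ℕ) (I J : Ideal (PS K n)) (hI : IsHomog K n I) (hJ : IsHomog K n J) :
    generally K n (fun g => ∀ i : ℕ,
      torIQ K n I (Ideal.map (coordChange K n g) J) i j ≤
        torIQ K n (initialIdealW K n w I) (initialIdealW K n w' J) i j) := by
  obtain ⟨g₀, hg₀⟩ :=
    exists_barRank_initialIdealW_le hI hJ w w' (Finset.range (j.toNat + 1)) j
  obtain ⟨F, hF, hgen⟩ := generally_barRank_map_le hI hJ g₀ (Finset.range (j.toNat + 1)) j
  refine ⟨F, hF, fun g hg => torIQ_le_torIQ hI ((isGradedAut_coordEquiv g).isHomog_map hJ)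
    hI.isHomog_initialIdealW hJ.isHomog_initialIdealW
    (fun p => (finrank_idealGrade_initialIdealW hI p).symm) (fun p => ?_) fun i hi => ?_⟩
  · rw [finrank_idealGrade_initialIdealW hJ]
    exact (isGradedAut_coordEquiv g).finrank_idealGrade_map J p
  · have hi : i ∈ Finset.range (j.toNat + 1) := Finset.mem_range.2 (by omega)
    exact (hg₀ i hi).trans (hgen g hg i hi)

end
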